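/- arXiv:1506.06277 — 10 statements merged into one kernel-verified Lean document; each statement's English description precedes it below -/
import Mathlib

section
/- Let d ≥ 1 and let Σ₁, Σ₂, Σ₃ be pairwise distinct finite sets, each of cardinality d+1, such that |Σᵢ ∩ Σⱼ| = d for all i ≠ j. Then exactly one of the following holds: (d-star) there exist a finite set σ with |σ| = d−1 and pairwise distinct elements a, b, c not in σ such that Σ₁ = σ ∪ {a,b}, Σ₂ = σ ∪ {b,c}, Σ₃ = σ ∪ {a,c}; or (d-windmill) there exist a finite set τ with |τ| = d and pairwise distinct elements v₁, v₂, v₃ not in τ such that Σᵢ = τ ∪ {vᵢ} for i = 1, 2, 3. -/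
/-!
Each difference `Sᵢ \ Sⱼ` is a single vertex. Compare the vertex `a` of `S₁ \ S₂` with the vertex
`b` of `S₁ \ S₃`. If `a = b`, all pairwise intersections coincide with the ridge `S₁ \ {a}`, and the
facets are cones over it: a windmill. If `a ≠ b`, then `a ∈ S₃` and `b ∈ S₂`, and the vertex `c` of
`S₂ \ S₁` must lie in `S₃`, since `S₂ \ S₃` is already spent on `b`: a star over `S₁ ∩ S₂ ∩ S₃`.
The cases are exclusive because `S₁ ∩ S₂ ∩ S₃` has `d - 1` elements in a star and `d` in a windmill.
-/

/-- A facet has exactly one vertex outside an adjacent facet; the conclusion is stated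
elementwise. -/
lemma exists_unique_vertex_sdiff {α : Type*} [DecidableEq α] {d : ℕ} {S T : Finset α}
    (hS : S.card = d + 1) (hST : (S ∩ T).card = d) :
    ∃ a, ∀ x, (x ∈ S ∧ x ∉ T) ↔ x = a := by
  have h : (S \ T).card = 1 := by
    have := Finset.card_sdiff_add_card_inter S T
    omega
  obtain ⟨a, ha⟩ := Finset.card_eq_one.mp h
  exact ⟨a, fun x => by rw [← Finset.mem_sdiff, ha, Finset.mem_singleton]⟩

/-- The `d`-star and the `d`-windmill are the only two pure `d`-complexes whose dual graph
is the complete graph `K₃`: three pairwise distinct facets of cardinality `d + 1` with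
pairwise intersections of cardinality `d` form either a `d`-star or a `d`-windmill,
and not both. -/
theorem star_or_windmill
    {α : Type*} [DecidableEq α] (d : ℕ) (hd : 1 ≤ d)
    (S₁ S₂ S₃ : Finset α)
    (h12 : S₁ ≠ S₂) (h13 : S₁ ≠ S₃) (h23 : S₂ ≠ S₃)
    (c1 : S₁.card = d + 1) (c2 : S₂.card = d + 1) (c3 : S₃.card = d + 1)
    (i12 : (S₁ ∩ S₂).card = d) (i13 : (S₁ ∩ S₃).card = d) (i23 : (S₂ ∩ S₃).card = d) :
    Xor'
      (∃ (σ : Finset α) (a b c : α),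
        σ.card = d - 1 ∧ a ∉ σ ∧ b ∉ σ ∧ c ∉ σ ∧ a ≠ b ∧ a ≠ c ∧ b ≠ c ∧
        S₁ = σ ∪ {a, b} ∧ S₂ = σ ∪ {b, c} ∧ S₃ = σ ∪ {a, c})
      (∃ (τ : Finset α) (v₁ v₂ v₃ : α),
        τ.card = d ∧ v₁ ∉ τ ∧ v₂ ∉ τ ∧ v₃ ∉ τ ∧ v₁ ≠ v₂ ∧ v₁ ≠ v₃ ∧ v₂ ≠ v₃ ∧
        S₁ = τ ∪ {v₁} ∧ S₂ = τ ∪ {v₂} ∧ S₃ = τ ∪ {v₃}) := by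
  apply (xor_iff_or_and_not_and _ _).mpr
  refine ⟨?_, ?_⟩
  · obtain ⟨a, ha⟩ := exists_unique_vertex_sdiff c1 i12
    obtain ⟨b, hb⟩ := exists_unique_vertex_sdiff c1 i13
    obtain ⟨c, hc⟩ := exists_unique_vertex_sdiff c2 (Finset.inter_comm S₁ S₂ ▸ i12)
    obtain ⟨e, he⟩ := exists_unique_vertex_sdiff c2 i23
    obtain ⟨f, hf⟩ := exists_unique_vertex_sdiff c3 (Finset.inter_comm S₁ S₃ ▸ i13)
    have haS := (ha a).mpr rfl
    have hbS := (hb b).mpr rfl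
    have hcS := (hc c).mpr rfl
    have hfS := (hf f).mpr rfl
    by_cases hab : a = b
    · right
      have e13 : S₁ ∩ S₂ = S₁ ∩ S₃ := by
        ext x
        grind
      -- The ridge `S₁ ∩ S₂` is contained in `S₂ ∩ S₃`, which has the same cardinality.
      have e23 : S₁ ∩ S₂ = S₂ ∩ S₃ := by
        apply Finset.eq_of_subset_of_card_le
        · intro x hx
          grind
        · omega
      refine ⟨S₁ ∩ S₂, a, c, f, i12, ?_, ?_, ?_, ?_, ?_, ?_, ?_, ?_, ?_⟩
      iterate 6 grind
      all_goals ext x; have := Finset.ext_iff.mp e13 x; have := Finset.ext_iff.mp e23 x; grind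
    · left
      have haS₃ : a ∈ S₃ := by grind
      have hbS₂ : b ∈ S₂ := by grind
      have hbe : b = e := (he b).mp ⟨hbS₂, hbS.2⟩
      have hcS₃ : c ∈ S₃ := by grind
      have hcf : c = f := (hf c).mp ⟨hcS₃, hcS.2⟩
      have e1 : S₁ = (S₁ ∩ S₂ ∩ S₃) ∪ {a, b} := by
        ext x
        grind
      refine ⟨S₁ ∩ S₂ ∩ S₃, a, b, c, ?_, ?_, ?_, ?_, hab, ?_, ?_, e1, ?_, ?_⟩
      · have hdisj : Disjoint (S₁ ∩ S₂ ∩ S₃) {a, b} := by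
          rw [Finset.disjoint_right]
          grind
        have := Finset.card_union_of_disjoint hdisj
        rw [← e1, Finset.card_pair hab] at this
        omega
      iterate 5 grind
      all_goals ext x; grind
  · rintro ⟨⟨σ, a, b, c, hσ, ha, hb, hc, hab, hac, hbc, s1, s2, s3⟩,
      ⟨τ, v₁, v₂, v₃, hτ, h1, h2, h3, h12', h13', h23', t1, t2, t3⟩⟩
    have eσ : S₁ ∩ S₂ ∩ S₃ = σ := by
      rw [s1, s2, s3]
      ext x
      grind
    have eτ : S₁ ∩ S₂ ∩ S₃ = τ := by
      rw [t1, t2, t3]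
      ext x
      grind
    have hστ : σ = τ := eσ.symm.trans eτ
    rw [hστ] at hσ
    omega
end

section
/- Let d ≥ 1 and let Σ₁, Σ₂, Σ₃, Σ₄ be pairwise distinct finite sets, each of cardinality d+1, such that |Σ₁ ∩ Σ₂| = |Σ₁ ∩ Σ₃| = |Σ₂ ∩ Σ₃| = |Σ₂ ∩ Σ₄| = |Σ₃ ∩ Σ₄| = d while |Σ₁ ∩ Σ₄| < d. Then |Σ₁ ∩ Σ₄| = d − 1. -/
/-- In a pure `d`-complex whose dual graph is the diamond graph (`K₄` minus the edge
`{1,4}`), the two non-adjacent facets share exactly `d - 1` vertices. -/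
theorem diamond_nonadjacent_card
    {α : Type*} [DecidableEq α] (d : ℕ) (hd : 1 ≤ d)
    (S₁ S₂ S₃ S₄ : Finset α)
    (h12 : S₁ ≠ S₂) (h13 : S₁ ≠ S₃) (h14 : S₁ ≠ S₄)
    (h23 : S₂ ≠ S₃) (h24 : S₂ ≠ S₄) (h34 : S₃ ≠ S₄)
    (c1 : S₁.card = d + 1) (c2 : S₂.card = d + 1) (c3 : S₃.card = d + 1)
    (c4 : S₄.card = d + 1)
    (i12 : (S₁ ∩ S₂).card = d) (i13 : (S₁ ∩ S₃).card = d) (i23 : (S₂ ∩ S₃).card = d)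
    (i24 : (S₂ ∩ S₄).card = d) (i34 : (S₃ ∩ S₄).card = d)
    (i14 : (S₁ ∩ S₄).card < d) :
    (S₁ ∩ S₄).card = d - 1 := by
  -- `S₁ ∩ S₂` and `S₂ ∩ S₄` are `d`-subsets of the `(d + 1)`-set `S₂`, so they share at least
  -- `d - 1` elements, all of which lie in `S₁ ∩ S₄`.
  have hsum := Finset.card_union_add_card_inter (S₁ ∩ S₂) (S₂ ∩ S₄)
  have hunion : ((S₁ ∩ S₂) ∪ (S₂ ∩ S₄)).card ≤ S₂.card :=
    Finset.card_le_card (Finset.union_subset Finset.inter_subset_right Finset.inter_subset_left)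
  have hinter : ((S₁ ∩ S₂) ∩ (S₂ ∩ S₄)).card ≤ (S₁ ∩ S₄).card :=
    Finset.card_le_card (Finset.inter_subset_inter Finset.inter_subset_left
      Finset.inter_subset_right)
  omega
end

section
/- Let d ≥ 1 and m ≥ 1. There exist pairwise distinct finite sets Σ₀, Σ₁, ..., Σₘ, each of cardinality d+1, such that |Σ₀ ∩ Σᵢ| = d for all 1 ≤ i ≤ m and |Σᵢ ∩ Σⱼ| < d for all 1 ≤ i < j ≤ m, if and only if m ≤ d+1. Equivalently, the star graph K_{1,m} is the dual graph of a pure d-dimensional simplicial complex if and only if d ≥ m−1. -/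
/-! If `S 0` is the center of the star, each leaf cuts out a `d`-element subset of `S 0`. Two leaves
with the same trace on `S 0` would share at least `d` elements, so the traces are pairwise distinct,
and `S 0` has only `(d + 1).choose d = d + 1` subsets of size `d`. Conversely, taking
`S 0 = {0, …, d}` and replacing the vertex `i` by a new vertex `d + 1 + i` gives up to `d + 1`
leaves, any two of which share `d - 1` elements. -/

/-- The facet obtained from `{0, …, d}` by replacing the vertex `i` by the new vertex
`d + 1 + i`. -/
def starLeaf (d i : ℕ) : Finset ℕ :=
  insert (d + 1 + i) ((Finset.range (d + 1)).erase i)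

theorem starLeaf_card {d i : ℕ} (hi : i < d + 1) : (starLeaf d i).card = d + 1 := by
  rw [starLeaf, Finset.card_insert_of_notMem (by simp; omega),
    Finset.card_erase_of_mem (by simpa using hi)]
  simp

theorem range_inter_starLeaf_card {d i : ℕ} (hi : i < d + 1) :
    (Finset.range (d + 1) ∩ starLeaf d i).card = d := by
  have h : Finset.range (d + 1) ∩ starLeaf d i = (Finset.range (d + 1)).erase i := by
    ext x
    simp only [starLeaf, Finset.mem_inter, Finset.mem_insert, Finset.mem_erase, Finset.mem_range]
    omega
  rw [h, Finset.card_erase_of_mem (by simpa using hi)]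
  simp

theorem starLeaf_inter_card {d i j : ℕ} (hd : 1 ≤ d) (hi : i < d + 1) (hj : j < d + 1)
    (hij : i ≠ j) : (starLeaf d i ∩ starLeaf d j).card < d := by
  have h : starLeaf d i ∩ starLeaf d j = ((Finset.range (d + 1)).erase i).erase j := by
    ext x
    simp only [starLeaf, Finset.mem_inter, Finset.mem_insert, Finset.mem_erase, Finset.mem_range]
    omega
  rw [h, Finset.card_erase_of_mem (by simp [hij.symm]; omega),
    Finset.card_erase_of_mem (by simpa using hi), Finset.card_range]
  omega

/-- The star graph `K_{1,m}` is the dual graph of a pure `d`-dimensional simplicial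
complex if and only if `m ≤ d + 1` (equivalently, `d ≥ m - 1`): there exist pairwise
distinct finite sets `Σ₀, Σ₁, ..., Σₘ` of cardinality `d + 1` with `|Σ₀ ∩ Σᵢ| = d` for
`1 ≤ i ≤ m` and `|Σᵢ ∩ Σⱼ| < d` for `1 ≤ i < j ≤ m`, iff `m ≤ d + 1`. -/
theorem star_graph_dual_iff (d m : ℕ) (hd : 1 ≤ d) (hm : 1 ≤ m) :
    (∃ S : Fin (m + 1) → Finset ℕ,
      (∀ i j, i ≠ j → S i ≠ S j) ∧
      (∀ i, (S i).card = d + 1) ∧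
      (∀ i : Fin m, (S 0 ∩ S i.succ).card = d) ∧
      (∀ i j : Fin m, i ≠ j → (S i.succ ∩ S j.succ).card < d)) ↔ m ≤ d + 1 := by
  constructor
  · rintro ⟨S, -, hcard, h0, hlt⟩
    have hle : (Finset.univ : Finset (Fin m)).card ≤ ((S 0).powersetCard d).card := by
      refine Finset.card_le_card_of_injOn (fun i => S 0 ∩ S i.succ) ?_ ?_
      · intro i _
        exact Finset.mem_coe.2 (Finset.mem_powersetCard.2 ⟨Finset.inter_subset_left, h0 i⟩)
      · intro i _ j _ hij
        by_contra hne
        have hsub : S 0 ∩ S i.succ ⊆ S i.succ ∩ S j.succ :=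
          Finset.subset_inter Finset.inter_subset_right
            (hij.subset.trans Finset.inter_subset_right)
        have := Finset.card_le_card hsub
        have := hlt i j hne
        have := h0 i
        omega
    simpa [Finset.card_powersetCard, hcard, Nat.choose_succ_self_right] using hle
  · intro hmd
    have hi (i : Fin m) : (i : ℕ) < d + 1 := i.isLt.trans_le hmd
    have hcenter (i : Fin m) : Finset.range (d + 1) ≠ starLeaf d i := by
      intro h
      have := range_inter_starLeaf_card (hi i)
      rw [← h, Finset.inter_self, Finset.card_range] at this
      omega
    refine ⟨Fin.cons (Finset.range (d + 1)) (fun i => starLeaf d i), ?_, ?_, ?_, ?_⟩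
    · intro i j hij
      cases i using Fin.cases with
      | zero =>
        cases j using Fin.cases with
        | zero => exact absurd rfl hij
        | succ j => simpa using hcenter j
      | succ i =>
        cases j using Fin.cases with
        | zero => simpa using (hcenter i).symm
        | succ j =>
          intro h
          simp only [Fin.cons_succ] at h
          have hne : (i : ℕ) ≠ j := fun e => hij (congrArg Fin.succ (Fin.ext e))
          have h1 := starLeaf_inter_card hd (hi i) (hi j) hne
          rw [← h, Finset.inter_self, starLeaf_card (hi i)] at h1
          omega
    · intro i
      cases i using Fin.cases with
      | zero => simp
      | succ i => simpa using starLeaf_card (hi i)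
    · intro i
      simpa using range_inter_starLeaf_card (hi i)
    · intro i j hij
      simpa using starLeaf_inter_card hd (hi i) (hi j) (fun e => hij (Fin.ext e))
end

section
/- Let K be an infinite field, d ≥ 1, and let Σ₁, ..., Σ_s be pairwise distinct finite sets, each of cardinality d+1. Then there exist a finite-dimensional K-vector space V and pairwise distinct linear subspaces W₁, ..., W_s of V, each of dimension 2, such that for all i ≠ j one has dim(Wᵢ ∩ Wⱼ) = 1 if and only if |Σᵢ ∩ Σⱼ| = d. In other words, the dual graph of any pure simplicial complex is also the dual graph of an arrangement of projective lines. -/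
/-!
To a facet `S i` of cardinality `d + 1` corresponds the coordinate subspace `K ^ (S i)` of `K ^ n`,
where `n` is the number of vertices. Intersect all these coordinate subspaces with one linear
subspace of codimension `d - 1` in general position: the kernel of a Vandermonde matrix with
`d - 1` rows and distinct nodes `t v`, which exist because `K` is infinite. Every maximal minor of
that matrix is nonzero, so the section of `K ^ T` has dimension `#T - (d - 1)`, truncated at `0`
(`finrank_coordSection`). Since `K ^ T ∩ K ^ T' = K ^ (T ∩ T')`, the section of a facet has
dimension `2`, and two of them meet in dimension `1` exactly when the facets share `d` vertices.
-/

/-- The vectors of `K ^ n` supported on `T` and annihilated by the Vandermonde matrix with nodes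
`t v` and exponents `0, …, m - 1`. -/
def coordSection {K : Type*} [Field K] {n : ℕ} (m : ℕ) (t : Fin n → K) (T : Finset (Fin n)) :
    Submodule K (Fin n → K) where
  carrier := {x | (∀ v, v ∉ T → x v = 0) ∧ ∀ k : Fin m, ∑ v, x v * t v ^ (k : ℕ) = 0}
  add_mem' := by
    rintro x y ⟨hx, hx'⟩ ⟨hy, hy'⟩
    refine ⟨fun v hv => by simp [hx v hv, hy v hv], fun k => ?_⟩
    simp [add_mul, Finset.sum_add_distrib, hx' k, hy' k]
  zero_mem' := by simp
  smul_mem' := by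
    rintro c x ⟨hx, hx'⟩
    refine ⟨fun v hv => by simp [hx v hv], fun k => ?_⟩
    simp [mul_assoc, ← Finset.mul_sum, hx' k]

theorem mem_coordSection {K : Type*} [Field K] {n m : ℕ} {t : Fin n → K} {T : Finset (Fin n)}
    {x : Fin n → K} : x ∈ coordSection m t T ↔
      (∀ v, v ∉ T → x v = 0) ∧ ∀ k : Fin m, ∑ v, x v * t v ^ (k : ℕ) = 0 := Iff.rfl

theorem coordSection_inf {K : Type*} [Field K] {n m : ℕ} (t : Fin n → K)
    (T T' : Finset (Fin n)) :
    coordSection m t T ⊓ coordSection m t T' = coordSection m t (T ∩ T') := by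
  ext x
  simp only [Submodule.mem_inf, mem_coordSection, Finset.mem_inter]
  grind

/-- Invertibility of square Vandermonde matrices: on at most `m` coordinates, `m` Vandermonde
equations with distinct nodes have only the zero solution. -/
theorem coordSection_eq_zero {K : Type*} [Field K] {n m : ℕ} {t : Fin n → K}
    (ht : Function.Injective t) {T : Finset (Fin n)} (hT : T.card ≤ m) {x : Fin n → K}
    (hx : x ∈ coordSection m t T) : x = 0 := by
  obtain ⟨h0, hs⟩ := hx
  let e := T.equivFin
  have key : (fun j : Fin T.card => x (e.symm j)) = 0 := by
    refine Matrix.eq_zero_of_forall_pow_sum_mul_pow_eq_zero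
      (f := fun j : Fin T.card => t (e.symm j)) ?_ fun i => ?_
    · exact ht.comp (Subtype.val_injective.comp e.symm.injective)
    · rw [← hs ⟨i, i.2.trans_le hT⟩,
        Equiv.sum_comp e.symm (fun v : T => x v * t v ^ (i : ℕ)),
        Finset.sum_coe_sort T (fun v => x v * t v ^ (i : ℕ))]
      exact Finset.sum_subset (Finset.subset_univ _) fun v _ hv => by simp [h0 v hv]
  ext v
  by_cases hv : v ∈ T
  · simpa using congrFun key (e ⟨v, hv⟩)
  · exact h0 v hv

/-- The section is cut out of `K ^ n` by `n - #T` vanishing conditions and `m` Vandermonde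
equations, whether or not these are independent. -/
theorem le_finrank_coordSection {K : Type*} [Field K] {n : ℕ} (m : ℕ) (t : Fin n → K)
    (T : Finset (Fin n)) : T.card ≤ Module.finrank K (coordSection m t T) + m := by
  let L : (Fin n → K) →ₗ[K] ({v // v ∉ T} → K) × (Fin m → K) :=
    (LinearMap.funLeft K K Subtype.val).prod
      (LinearMap.pi fun k : Fin m => ∑ v, t v ^ (k : ℕ) • LinearMap.proj v)
  have hL : LinearMap.ker L = coordSection m t T := by
    ext x
    rw [LinearMap.mem_ker, mem_coordSection, LinearMap.prod_apply]
    refine Prod.mk_eq_zero.trans (and_congr ?_ ?_)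
    · simp [funext_iff, LinearMap.funLeft_apply]
    · simp [funext_iff, mul_comm]
  have h1 := L.finrank_range_add_finrank_ker
  have h2 := (LinearMap.range L).finrank_le
  have h3 : Fintype.card {v // v ∉ T} = n - T.card := by
    rw [Fintype.card_subtype_compl]; simp
  have h4 : T.card ≤ n := by simpa using T.card_le_univ
  rw [hL] at h1
  simp only [Module.finrank_prod, Module.finrank_fintype_fun_eq_card, h3, Fintype.card_fin]
    at h1 h2
  omega

/-- The upper bound holds because an element of the section is determined by its coordinates outside any
`m`-element subset of `T`. -/
theorem finrank_coordSection {K : Type*} [Field K] {n m : ℕ} {t : Fin n → K}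
    (ht : Function.Injective t) (T : Finset (Fin n)) :
    Module.finrank K (coordSection m t T) = T.card - m := by
  refine le_antisymm ?_ (by have := le_finrank_coordSection m t T; omega)
  obtain ⟨T₀, hT₀, hc⟩ := Finset.exists_subset_card_eq (min_le_left T.card m)
  let R : coordSection m t T →ₗ[K] (↥(T \ T₀) → K) :=
    (LinearMap.funLeft K K Subtype.val).comp (coordSection m t T).subtype
  have hR : Function.Injective R := by
    rw [← LinearMap.ker_eq_bot, LinearMap.ker_eq_bot']
    rintro ⟨x, hx⟩ h
    refine Subtype.ext (coordSection_eq_zero (T := T₀) ht (hc.trans_le (min_le_right _ _))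
      ⟨fun v hv => ?_, hx.2⟩)
    by_cases hvT : v ∈ T
    · exact congrFun h ⟨v, Finset.mem_sdiff.2 ⟨hvT, hv⟩⟩
    · exact hx.1 v hvT
  have h := LinearMap.finrank_le_finrank_of_injective hR
  rw [Module.finrank_fintype_fun_eq_card, Fintype.card_coe, Finset.card_sdiff_of_subset hT₀] at h
  omega

/-- The dual graph of any pure `d`-dimensional simplicial complex is also the dual graph
of an arrangement of projective lines over any infinite field `K`: lines in the projective
space of a `K`-vector space `V` correspond to `2`-dimensional linear subspaces `W ≤ V`,
two distinct lines meeting iff `dim (W ∩ W') = 1`. -/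
theorem dual_graph_of_complex_is_dual_graph_of_line_arrangement
    (K : Type*) [Field K] [Infinite K] (d : ℕ) (hd : 1 ≤ d)
    {α : Type*} [DecidableEq α] (s : ℕ) (S : Fin s → Finset α)
    (hdist : ∀ i j, i ≠ j → S i ≠ S j) (hcard : ∀ i, (S i).card = d + 1) :
    ∃ (n : ℕ) (W : Fin s → Submodule K (Fin n → K)),
      (∀ i j, i ≠ j → W i ≠ W j) ∧
      (∀ i, Module.finrank K (W i) = 2) ∧
      (∀ i j, i ≠ j →
        (Module.finrank K ↥(W i ⊓ W j) = 1 ↔ (S i ∩ S j).card = d)) := by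
  let A : Finset α := Finset.univ.biUnion S
  let e := A.equivFin
  let T : Finset α → Finset (Fin A.card) := fun B =>
    Finset.univ.filter fun v => (e.symm v : α) ∈ B
  have hT : ∀ B ⊆ A, (T B).card = B.card := fun B hB => by
    refine Finset.card_bij (fun v _ => (e.symm v : α)) (fun v hv => (Finset.mem_filter.1 hv).2)
      (fun v _ w _ h => e.symm.injective (Subtype.ext h)) fun b hb => ?_
    exact ⟨e ⟨b, hB hb⟩, by simp [T, hb], by simp⟩
  have hTi : ∀ B C, T B ∩ T C = T (B ∩ C) := fun B C => by ext; simp [T]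
  have hSA : ∀ i, S i ⊆ A := fun i => Finset.subset_biUnion_of_mem S (Finset.mem_univ i)
  let t : Fin A.card → K := fun v => Infinite.natEmbedding K v
  have ht : Function.Injective t := (Infinite.natEmbedding K).injective.comp Fin.val_injective
  let W : Fin s → Submodule K (Fin A.card → K) := fun i => coordSection (d - 1) t (T (S i))
  have hW : ∀ i, Module.finrank K (W i) = 2 := fun i => by
    rw [finrank_coordSection ht, hT _ (hSA i), hcard]
    omega
  have hWi : ∀ i j, Module.finrank K ↥(W i ⊓ W j) = (S i ∩ S j).card - (d - 1) := fun i j => by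
    rw [coordSection_inf, hTi, finrank_coordSection ht,
      hT _ (Finset.inter_subset_left.trans (hSA i))]
  refine ⟨A.card, W, fun i j hij h => ?_, hW, fun i j _ => by rw [hWi]; omega⟩
  -- Equal sections force the facets to share all `d + 1` vertices.
  have h2 := hWi i j
  rw [← h, inf_idem, hW] at h2
  have hi : S i ∩ S j = S i :=
    Finset.eq_of_subset_of_card_le Finset.inter_subset_left (by rw [hcard]; omega)
  have hj : S i ∩ S j = S j :=
    Finset.eq_of_subset_of_card_le Finset.inter_subset_right (by rw [hcard]; omega)
  exact hdist i j hij (hi.symm.trans hj)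
end

section
/- Let K be an infinite field, V a finite-dimensional K-vector space, and W₁, ..., W_s pairwise distinct 2-dimensional linear subspaces of V. Then there exist pairwise distinct affine lines ℓ₁, ..., ℓ_s in a finite-dimensional K-vector space such that for all i ≠ j one has ℓᵢ ∩ ℓⱼ ≠ ∅ if and only if dim(Wᵢ ∩ Wⱼ) = 1. In other words, the dual graph of any projective line arrangement is also the dual graph of an affine line arrangement. -/
/-!
Choose a linear functional `f` on `V` whose kernel contains none of the nonzero subspaces
`Wᵢ ⊓ Wⱼ` (the case `i = j` included). It exists because, `K` being infinite, finitely many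
nonzero vectors, one in each of these subspaces, admit a common functional vanishing on none of
them. In the affine chart `f = 1` each `Wᵢ` becomes an affine line, and no meeting point of two
of the projective lines lies on the hyperplane at infinity `ker f`, so none is lost.
-/

open Module

/-- A hyperplane that does not contain `W` cuts it down by exactly one dimension. -/
lemma finrank_inf_ker_add_one {K V : Type*} [Field K] [AddCommGroup V] [Module K V]
    [FiniteDimensional K V] (W : Submodule K V) (f : Dual K V) {v : V} (hv : v ∈ W)
    (hfv : f v ≠ 0) : finrank K ↥(W ⊓ LinearMap.ker f) + 1 = finrank K W := by
  have hg : f.domRestrict W ≠ 0 := fun h => hfv (LinearMap.congr_fun h ⟨v, hv⟩)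
  rw [← Dual.finrank_ker_add_one_of_ne_zero hg, LinearMap.ker_domRestrict,
    ← Submodule.map_comap_subtype, LinearEquiv.finrank_eq
      (Submodule.equivSubtypeMap W (Submodule.comap W.subtype (LinearMap.ker f)))]

/-- The arrangement inside an arbitrary ambient space `V`: the lines are the slices
`Wᵢ ∩ {f = 1}` for a suitable functional `f`. -/
lemma exists_affine_lines {K V : Type*} [Field K] [Infinite K] [AddCommGroup V] [Module K V]
    [FiniteDimensional K V] {ι : Type*} [Finite ι] (W : ι → Submodule K V)
    (hdist : ∀ i j, i ≠ j → W i ≠ W j) (hrank : ∀ i, finrank K (W i) = 2) :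
    ∃ ℓ : ι → AffineSubspace K V,
      (∀ i j, i ≠ j → ℓ i ≠ ℓ j) ∧
      (∀ i, (ℓ i : Set V).Nonempty ∧ finrank K (ℓ i).direction = 1) ∧
      (∀ i j, i ≠ j → (((ℓ i : Set V) ∩ (ℓ j : Set V)).Nonempty ↔
        finrank K ↥(W i ⊓ W j) = 1)) := by
  have hex (p : {p : ι × ι // W p.1 ⊓ W p.2 ≠ ⊥}) :
      ∃ v ∈ W p.1.1 ⊓ W p.1.2, v ≠ 0 := Submodule.exists_mem_ne_zero_of_ne_bot p.2
  choose v hvW hv0 using hex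
  obtain ⟨f, hf⟩ := exists_dual_forall_apply_ne_zero (K := K) v hv0
  have hpt (i j) (h : W i ⊓ W j ≠ ⊥) : ∃ x, x ∈ W i ∧ x ∈ W j ∧ f x = 1 := by
    have hm := hvW ⟨(i, j), h⟩
    exact ⟨(f (v ⟨(i, j), h⟩))⁻¹ • v ⟨(i, j), h⟩, (W i).smul_mem _ hm.1,
      (W j).smul_mem _ hm.2, by simp [hf ⟨(i, j), h⟩]⟩
  have hself (i) : W i ⊓ W i ≠ ⊥ := by
    intro h
    have h2 := hrank i
    rw [inf_idem] at h
    rw [h, finrank_bot] at h2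
    omega
  choose p hp _ hfp using fun i => hpt i i (hself i)
  let ℓ (i : ι) : AffineSubspace K V := AffineSubspace.mk' (p i) (W i ⊓ LinearMap.ker f)
  have hmem (i x) : x ∈ ℓ i ↔ x ∈ W i ∧ f x = 1 := by
    simp only [ℓ, AffineSubspace.mem_mk', vsub_eq_sub, Submodule.mem_inf, LinearMap.mem_ker,
      map_sub, hfp, sub_eq_zero, (W i).sub_mem_iff_left (hp i)]
  -- `W i` is recovered from `ℓ i` as its linear span.
  have hle (i j) (h : ℓ i = ℓ j) : W i ≤ W j := by
    have hsub (x) (hx : x ∈ W i) (hx1 : f x = 1) : x ∈ W j :=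
      ((hmem j x).1 (h ▸ (hmem i x).2 ⟨hx, hx1⟩)).1
    intro w hw
    by_cases h0 : f w = 0
    · have h1 := hsub (w + p i) ((W i).add_mem hw (hp i)) (by simp [h0, hfp])
      exact ((W j).add_mem_iff_left (hsub _ (hp i) (hfp i))).1 h1
    · exact ((W j).smul_mem_iff (inv_ne_zero h0)).1
        (hsub ((f w)⁻¹ • w) ((W i).smul_mem _ hw) (by simp [h0]))
  refine ⟨ℓ, fun i j hij h => hdist i j hij (le_antisymm (hle i j h) (hle j i h.symm)),
    fun i => ⟨AffineSubspace.mk'_nonempty _ _, ?_⟩, fun i j hij => ⟨?_, ?_⟩⟩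
  · have := finrank_inf_ker_add_one (W i) f (hp i) (by simp [hfp])
    rw [hrank] at this
    rw [AffineSubspace.direction_mk']
    omega
  · rintro ⟨x, hxi, hxj⟩
    obtain ⟨hxi, hx1⟩ := (hmem i x).1 hxi
    obtain ⟨hxj, -⟩ := (hmem j x).1 hxj
    have hpos : finrank K ↥(W i ⊓ W j) ≠ 0 := by
      intro h
      have hx0 : x ∈ (⊥ : Submodule K V) := Submodule.finrank_eq_zero.1 h ▸ ⟨hxi, hxj⟩
      simp [(Submodule.mem_bot K).1 hx0] at hx1
    have hlt : finrank K ↥(W i ⊓ W j) < 2 := by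
      by_contra! h
      have hi := Submodule.eq_of_le_of_finrank_le (inf_le_left : W i ⊓ W j ≤ W i)
        (by rwa [hrank])
      have hj := Submodule.eq_of_le_of_finrank_le (inf_le_right : W i ⊓ W j ≤ W j)
        (by rwa [hrank])
      exact hdist i j hij (hi.symm.trans hj)
    omega
  · intro h
    obtain ⟨x, hxi, hxj, hx1⟩ := hpt i j (by intro h0; rw [h0, finrank_bot] at h; omega)
    exact ⟨x, (hmem i x).2 ⟨hxi, hx1⟩, (hmem j x).2 ⟨hxj, hx1⟩⟩

/-- The dual graph of any projective line arrangement is also the dual graph of an affine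
line arrangement: given pairwise distinct `2`-dimensional subspaces `W₁, ..., Wₛ` of a
finite-dimensional vector space over an infinite field `K`, there are pairwise distinct
affine lines `ℓ₁, ..., ℓₛ` in some finite-dimensional `K`-vector space such that
`ℓᵢ ∩ ℓⱼ ≠ ∅ ↔ dim (Wᵢ ∩ Wⱼ) = 1` for `i ≠ j`. -/
theorem projective_line_arrangement_to_affine
    (K : Type*) [Field K] [Infinite K]
    (V : Type*) [AddCommGroup V] [Module K V] [FiniteDimensional K V]
    (s : ℕ) (W : Fin s → Submodule K V)
    (hdist : ∀ i j, i ≠ j → W i ≠ W j)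
    (hrank : ∀ i, Module.finrank K (W i) = 2) :
    ∃ (n : ℕ) (ℓ : Fin s → AffineSubspace K (Fin n → K)),
      (∀ i j, i ≠ j → ℓ i ≠ ℓ j) ∧
      (∀ i, ((ℓ i : Set (Fin n → K)).Nonempty ∧
        Module.finrank K (ℓ i).direction = 1)) ∧
      (∀ i j, i ≠ j →
        (((ℓ i : Set (Fin n → K)) ∩ (ℓ j : Set (Fin n → K))).Nonempty ↔
          Module.finrank K ↥(W i ⊓ W j) = 1)) := by
  let e : V ≃ₗ[K] (Fin (Module.finrank K V) → K) := (Module.finBasis K V).equivFun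
  obtain ⟨ℓ, h1, h2, h3⟩ := exists_affine_lines
    (fun i => (W i).map (e : V →ₗ[K] (Fin (Module.finrank K V) → K)))
    (fun i j hij h => hdist i j hij (Submodule.map_injective_of_injective e.injective h))
    (fun i => (e.finrank_map_eq (W i)).trans (hrank i))
  refine ⟨_, ℓ, h1, h2, fun i j hij => (h3 i j hij).trans ?_⟩
  rw [← Submodule.map_inf _ e.injective, e.finrank_map_eq]
end

section
/- Let K be a field, V a K-vector space, and ℓ₁, ℓ₂ two distinct affine lines in V passing through a common point P. If r is an affine line in V with r ∩ ℓ₁ ≠ ∅ and r ∩ ℓ₂ ≠ ∅, then either P ∈ r, or r is contained in the affine span of ℓ₁ ∪ ℓ₂. -/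
/-!
An affine line is determined by any two of its distinct points (`line_le_of_two_mem`). Let `A` be
a point of `r ∩ ℓ₁` and `B` a point of `r ∩ ℓ₂`. If `A ≠ B`, then `r` is the line through two
points of the affine span of `ℓ₁ ∪ ℓ₂`, so it lies in that span. If `A = B`, this point lies on
both `ℓ₁` and `ℓ₂`; as these lines are distinct, it is `P`, so `P ∈ r`.
-/

/-- An affine line lies in every affine subspace that contains two distinct points of it. -/
theorem line_le_of_two_mem {K V : Type*} [Field K] [AddCommGroup V] [Module K V]
    {s t : AffineSubspace K V} (hs : Module.finrank K s.direction = 1) {x y : V} (hxy : x ≠ y)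
    (hxs : x ∈ s) (hys : y ∈ s) (hxt : x ∈ t) (hyt : y ∈ t) : s ≤ t := by
  intro z hz
  have hv : (⟨y -ᵥ x, AffineSubspace.vsub_mem_direction hys hxs⟩ : s.direction) ≠ 0 := by
    intro h
    exact hxy (vsub_eq_zero_iff_eq.mp (congrArg Subtype.val h)).symm
  obtain ⟨c, hc⟩ := (finrank_eq_one_iff_of_nonzero' _ hv).mp hs
    ⟨z -ᵥ x, AffineSubspace.vsub_mem_direction hz hxs⟩
  have hc' : c • (y -ᵥ x) = z -ᵥ x := congrArg Subtype.val hc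
  have hz' : AffineMap.lineMap x y c = z := by
    rw [AffineMap.lineMap_apply, hc', vsub_vadd]
  exact hz' ▸ AffineMap.lineMap_mem c hxt hyt

/-- If `ℓ₁, ℓ₂` are two distinct affine lines through a common point `P`, then any affine
line `r` meeting both `ℓ₁` and `ℓ₂` either passes through `P` or is contained in the
affine span of `ℓ₁ ∪ ℓ₂`. -/
theorem line_meeting_two_concurrent_lines
    (K : Type*) [Field K] (V : Type*) [AddCommGroup V] [Module K V]
    (ℓ₁ ℓ₂ r : AffineSubspace K V) (P : V)
    (hl₁ : (ℓ₁ : Set V).Nonempty ∧ Module.finrank K ℓ₁.direction = 1)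
    (hl₂ : (ℓ₂ : Set V).Nonempty ∧ Module.finrank K ℓ₂.direction = 1)
    (hr : (r : Set V).Nonempty ∧ Module.finrank K r.direction = 1)
    (hne : ℓ₁ ≠ ℓ₂) (hP₁ : P ∈ ℓ₁) (hP₂ : P ∈ ℓ₂)
    (hr₁ : ((r : Set V) ∩ (ℓ₁ : Set V)).Nonempty)
    (hr₂ : ((r : Set V) ∩ (ℓ₂ : Set V)).Nonempty) :
    P ∈ r ∨ r ≤ affineSpan K ((ℓ₁ : Set V) ∪ (ℓ₂ : Set V)) := by
  obtain ⟨A, hAr, hA₁⟩ := hr₁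
  obtain ⟨B, hBr, hB₂⟩ := hr₂
  by_cases hAB : A = B
  · subst hAB
    left
    by_cases hAP : A = P
    · exact hAP ▸ hAr
    · exact absurd (le_antisymm (line_le_of_two_mem hl₁.2 hAP hA₁ hP₁ hB₂ hP₂)
        (line_le_of_two_mem hl₂.2 hAP hB₂ hP₂ hA₁ hP₁)) hne
  · right
    exact line_le_of_two_mem hr.2 hAB hAr hBr
      (subset_affineSpan K _ (Or.inl hA₁)) (subset_affineSpan K _ (Or.inr hB₂))
end

section
/- Let K be a field and V a K-vector space. Let r₁, r₂ be distinct affine lines through a point P, with affine span π, and let r₃, r₄ be distinct affine lines through a point Q, with affine span 𝔮. Assume rᵢ ∩ rⱼ = ∅ for all i ∈ {1,2} and j ∈ {3,4}, and moreover Q ∉ π and P ∉ 𝔮. Then every affine line r satisfying r ∩ rᵢ ≠ ∅ for all i = 1, 2, 3, 4 either contains both P and Q, or is contained in π ∩ 𝔮. In particular, at most two distinct lines can meet all four of r₁, r₂, r₃, r₄. -/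
/-!
A line meeting two distinct concurrent lines either meets them in two different points, hence lies
in their plane, or meets both at their common point (`common_mem_or_le_span`). Applying this to
`r₁, r₂` and to `r₃, r₄` gives four cases; the two mixed ones would put `P` in `𝔮` or `Q` in `π`,
so only the two stated alternatives remain.

Each alternative holds for at most one line. There is one line through `P ≠ Q`. Since
`P ∈ π \ 𝔮`, the intersection `π ∩ 𝔮` is a proper subspace of the plane `π`, so its dimension is
at most one and it contains at most one line (`eq_of_le_inf`). Among three lines meeting all of
`r₁, r₂, r₃, r₄`, two satisfy the same alternative and therefore coincide.
-/

section Lines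

variable {K V : Type*} [Field K] [AddCommGroup V] [Module K V]

theorem line_eq_of_le {s W : AffineSubspace K V} (hs : (s : Set V).Nonempty)
    (hs1 : Module.finrank K s.direction = 1) (hle : s ≤ W)
    [FiniteDimensional K W.direction] (hW : Module.finrank K W.direction ≤ 1) : s = W :=
  AffineSubspace.eq_of_direction_eq_of_nonempty_of_le
    (Submodule.eq_of_le_of_finrank_le (AffineSubspace.direction_le hle) (by omega)) hs hle

theorem line_eq_of_mem {r : AffineSubspace K V} (hr : Module.finrank K r.direction = 1)
    {A B : V} (hA : A ∈ r) (hB : B ∈ r) (hAB : A ≠ B) : affineSpan K {A, B} = r := by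
  have : FiniteDimensional K r.direction := Module.finite_of_finrank_eq_succ hr
  refine line_eq_of_le ⟨A, left_mem_affineSpan_pair K A B⟩ ?_ ?_ hr.le
  · rw [direction_affineSpan, vectorSpan_pair_rev]
    exact finrank_span_singleton (by simpa [sub_eq_zero] using hAB.symm)
  · exact affineSpan_le.2 (by rintro x (rfl | rfl) <;> assumption)

/-- The dichotomy: a line meeting two distinct lines through `P` passes through `P` or lies in
their plane. -/
theorem common_mem_or_le_span {a b r : AffineSubspace K V} {P : V}
    (ha : Module.finrank K a.direction = 1) (hb : Module.finrank K b.direction = 1)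
    (hab : a ≠ b) (hPa : P ∈ a) (hPb : P ∈ b) (hr : Module.finrank K r.direction = 1)
    (hra : ((r : Set V) ∩ (a : Set V)).Nonempty) (hrb : ((r : Set V) ∩ (b : Set V)).Nonempty) :
    P ∈ r ∨ r ≤ affineSpan K ((a : Set V) ∪ (b : Set V)) := by
  obtain ⟨A, hAr, hAa⟩ := hra
  obtain ⟨B, hBr, hBb⟩ := hrb
  by_cases hAB : A = B
  · subst hAB
    left
    by_cases hAP : A = P
    · exact hAP ▸ hAr
    · exact absurd ((line_eq_of_mem ha hAa hPa hAP).symm.trans (line_eq_of_mem hb hBb hPb hAP)) hab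
  · right
    rw [← line_eq_of_mem hr hAr hBr hAB]
    apply affineSpan_mono
    rintro x (rfl | rfl)
    exacts [Or.inl hAa, Or.inr hBb]

/-- If a point `P` common to the lines `a` and `b` is not in `W`, then `W` cuts their plane in a
subspace of dimension at most one, which contains at most one line. -/
theorem eq_of_le_inf {a b W s t : AffineSubspace K V} {P : V}
    (ha : Module.finrank K a.direction = 1) (hb : Module.finrank K b.direction = 1)
    (hPa : P ∈ a) (hPb : P ∈ b) (hPW : P ∉ W)
    (hs : (s : Set V).Nonempty ∧ Module.finrank K s.direction = 1)
    (ht : (t : Set V).Nonempty ∧ Module.finrank K t.direction = 1)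
    (hsW : s ≤ affineSpan K ((a : Set V) ∪ (b : Set V)) ⊓ W)
    (htW : t ≤ affineSpan K ((a : Set V) ∪ (b : Set V)) ⊓ W) : s = t := by
  have : FiniteDimensional K a.direction := Module.finite_of_finrank_eq_succ ha
  have : FiniteDimensional K b.direction := Module.finite_of_finrank_eq_succ hb
  have hdir : (affineSpan K ((a : Set V) ∪ (b : Set V))).direction
      = a.direction ⊔ b.direction := by
    rw [AffineSubspace.span_union, AffineSubspace.affineSpan_coe, AffineSubspace.affineSpan_coe,
      AffineSubspace.direction_sup hPa hPb]
    simp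
  have : FiniteDimensional K (affineSpan K ((a : Set V) ∪ (b : Set V))).direction := by
    rw [hdir]; infer_instance
  have hfin : Module.finrank K (affineSpan K ((a : Set V) ∪ (b : Set V))).direction ≤ 2 := by
    rw [hdir]
    have := Submodule.finrank_add_le_finrank_add_finrank a.direction b.direction
    omega
  have hlt : affineSpan K ((a : Set V) ∪ (b : Set V)) ⊓ W
      < affineSpan K ((a : Set V) ∪ (b : Set V)) :=
    lt_of_le_of_ne inf_le_left fun h =>
      hPW (inf_eq_left.1 h (subset_affineSpan K _ (Or.inl hPa)))
  have hdlt := AffineSubspace.direction_lt_of_nonempty hlt (hs.1.mono hsW)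
  have hflt := Submodule.finrank_lt_finrank_of_lt hdlt
  have : FiniteDimensional K (affineSpan K ((a : Set V) ∪ (b : Set V)) ⊓ W).direction :=
    Submodule.finiteDimensional_of_le hdlt.le
  exact (line_eq_of_le hs.1 hs.2 hsW (by omega)).trans
    (line_eq_of_le ht.1 ht.2 htW (by omega)).symm

end Lines


/-- Let `r₁, r₂` be distinct affine lines through `P` with affine span `π`, and `r₃, r₄`
distinct affine lines through `Q` with affine span `𝔮`; suppose `rᵢ ∩ rⱼ = ∅` for
`i ∈ {1,2}`, `j ∈ {3,4}`, `Q ∉ π` and `P ∉ 𝔮`. Then every affine line meeting all four of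
`r₁, r₂, r₃, r₄` either passes through both `P` and `Q` or is contained in `π ∩ 𝔮`;
in particular, at most two distinct lines can meet all four. -/
theorem lines_meeting_four_lines
    (K : Type*) [Field K] (V : Type*) [AddCommGroup V] [Module K V]
    (r₁ r₂ r₃ r₄ : AffineSubspace K V) (P Q : V)
    (h₁ : (r₁ : Set V).Nonempty ∧ Module.finrank K r₁.direction = 1)
    (h₂ : (r₂ : Set V).Nonempty ∧ Module.finrank K r₂.direction = 1)
    (h₃ : (r₃ : Set V).Nonempty ∧ Module.finrank K r₃.direction = 1)
    (h₄ : (r₄ : Set V).Nonempty ∧ Module.finrank K r₄.direction = 1)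
    (h₁₂ : r₁ ≠ r₂) (h₃₄ : r₃ ≠ r₄)
    (hP₁ : P ∈ r₁) (hP₂ : P ∈ r₂) (hQ₃ : Q ∈ r₃) (hQ₄ : Q ∈ r₄)
    (h₁₃ : (r₁ : Set V) ∩ (r₃ : Set V) = ∅) (h₁₄ : (r₁ : Set V) ∩ (r₄ : Set V) = ∅)
    (h₂₃ : (r₂ : Set V) ∩ (r₃ : Set V) = ∅) (h₂₄ : (r₂ : Set V) ∩ (r₄ : Set V) = ∅)
    (hQπ : Q ∉ affineSpan K ((r₁ : Set V) ∪ (r₂ : Set V)))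
    (hP𝔮 : P ∉ affineSpan K ((r₃ : Set V) ∪ (r₄ : Set V))) :
    (∀ r : AffineSubspace K V,
      (r : Set V).Nonempty → Module.finrank K r.direction = 1 →
      ((r : Set V) ∩ (r₁ : Set V)).Nonempty → ((r : Set V) ∩ (r₂ : Set V)).Nonempty →
      ((r : Set V) ∩ (r₃ : Set V)).Nonempty → ((r : Set V) ∩ (r₄ : Set V)).Nonempty →
      (P ∈ r ∧ Q ∈ r) ∨
        r ≤ affineSpan K ((r₁ : Set V) ∪ (r₂ : Set V)) ⊓
              affineSpan K ((r₃ : Set V) ∪ (r₄ : Set V))) ∧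
    (∀ s₁ s₂ s₃ : AffineSubspace K V,
      ((s₁ : Set V).Nonempty ∧ Module.finrank K s₁.direction = 1) →
      ((s₂ : Set V).Nonempty ∧ Module.finrank K s₂.direction = 1) →
      ((s₃ : Set V).Nonempty ∧ Module.finrank K s₃.direction = 1) →
      (∀ s ∈ ({s₁, s₂, s₃} : Set (AffineSubspace K V)),
        ∀ t ∈ ({r₁, r₂, r₃, r₄} : Set (AffineSubspace K V)),
          ((s : Set V) ∩ (t : Set V)).Nonempty) →
      s₁ ≠ s₂ → s₁ ≠ s₃ → s₂ ≠ s₃ → False) := by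
  have key : ∀ r : AffineSubspace K V,
      (r : Set V).Nonempty → Module.finrank K r.direction = 1 →
      ((r : Set V) ∩ (r₁ : Set V)).Nonempty → ((r : Set V) ∩ (r₂ : Set V)).Nonempty →
      ((r : Set V) ∩ (r₃ : Set V)).Nonempty → ((r : Set V) ∩ (r₄ : Set V)).Nonempty →
      (P ∈ r ∧ Q ∈ r) ∨
        r ≤ affineSpan K ((r₁ : Set V) ∪ (r₂ : Set V)) ⊓
              affineSpan K ((r₃ : Set V) ∪ (r₄ : Set V)) := by
    intro r _ hr i₁ i₂ i₃ i₄
    rcases common_mem_or_le_span h₁.2 h₂.2 h₁₂ hP₁ hP₂ hr i₁ i₂ with hP | hπ <;>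
      rcases common_mem_or_le_span h₃.2 h₄.2 h₃₄ hQ₃ hQ₄ hr i₃ i₄ with hQ | hq
    · exact Or.inl ⟨hP, hQ⟩
    · exact absurd (hq hP) hP𝔮
    · exact absurd (hπ hQ) hQπ
    · exact Or.inr (le_inf hπ hq)
  refine ⟨key, ?_⟩
  intro s₁ s₂ s₃ k₁ k₂ k₃ hmeet n₁₂ n₁₃ n₂₃
  have hPQ : P ≠ Q := fun h => hQπ (h ▸ subset_affineSpan K _ (Or.inl hP₁))
  have alt : ∀ s ∈ ({s₁, s₂, s₃} : Set (AffineSubspace K V)),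
      ((s : Set V).Nonempty ∧ Module.finrank K s.direction = 1) → _ := fun s hs k =>
    key s k.1 k.2 (hmeet s hs r₁ (by simp)) (hmeet s hs r₂ (by simp))
      (hmeet s hs r₃ (by simp)) (hmeet s hs r₄ (by simp))
  have uniq_PQ : ∀ s t : AffineSubspace K V,
      ((s : Set V).Nonempty ∧ Module.finrank K s.direction = 1) →
      ((t : Set V).Nonempty ∧ Module.finrank K t.direction = 1) →
      P ∈ s ∧ Q ∈ s → P ∈ t ∧ Q ∈ t → s = t := fun s t ks kt hs ht =>
    (line_eq_of_mem ks.2 hs.1 hs.2 hPQ).symm.trans (line_eq_of_mem kt.2 ht.1 ht.2 hPQ)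
  have uniq_inf := fun (s t : AffineSubspace K V) ks kt =>
    eq_of_le_inf (s := s) (t := t) h₁.2 h₂.2 hP₁ hP₂ hP𝔮 ks kt
  -- Pigeonhole: two of the three lines satisfy the same alternative.
  rcases alt s₁ (by simp) k₁ with a₁ | a₁ <;> rcases alt s₂ (by simp) k₂ with a₂ | a₂ <;>
    rcases alt s₃ (by simp) k₃ with a₃ | a₃
  · exact n₁₂ (uniq_PQ _ _ k₁ k₂ a₁ a₂)
  · exact n₁₂ (uniq_PQ _ _ k₁ k₂ a₁ a₂)
  · exact n₁₃ (uniq_PQ _ _ k₁ k₃ a₁ a₃)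
  · exact n₂₃ (uniq_inf _ _ k₂ k₃ a₂ a₃)
  · exact n₂₃ (uniq_PQ _ _ k₂ k₃ a₂ a₃)
  · exact n₁₃ (uniq_inf _ _ k₁ k₃ a₁ a₃)
  · exact n₁₂ (uniq_inf _ _ k₁ k₂ a₁ a₂)
  · exact n₁₂ (uniq_inf _ _ k₁ k₂ a₁ a₂)
end

section
/- For every finite connected simple graph G with at least one vertex, there exists a commutative Noetherian local ring A with maximal ideal 𝔪 such that: A is 𝔪-adically complete; the Krull dimension of A equals 2; A is equidimensional, i.e., the Krull dimension of A/p equals 2 for every minimal prime p of A; and there is a bijection v ↦ p_v from the vertices of G to the set of minimal primes of A such that, for all distinct vertices u and v, u is adjacent to v in G if and only if the Krull dimension of A/(p_u + p_v) equals 1. In other words, every connected graph is the Hochster–Huneke graph of a complete equidimensional Noetherian local ring. -/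
/-!
Let `B = ℚ⟦x, y⟧` and attach to every edge `e` of `G` a line `ℓ e = x - a e * y`, with distinct
slopes for distinct edges. Take one copy of the plane `Spec B` for every vertex and, for each
edge `e = uv`, glue the copies at `u` and `v` along `ℓ e = 0`: this is the ring
`A = {f : V → B | f u ≡ f v mod ℓ e for every edge e = uv}`, with `p_v` the kernel of evaluation
at `v`.

* `A` is a `B`-submodule of `B ^ V`, so it is finite over the complete Noetherian local ring `B`.
  Thus it is Noetherian of dimension at most `2`, and complete (`isAdicComplete_of_finite`) as soon
  as it is local. It is local because invertibility at one vertex propagates along the edges, and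
  `G` is connected (`gluedRing.isLocalHom_eval`).
* `A / p_v = B`, the `p_v` intersect in zero, and none contains another, because the function
  supported at `v` with value the product `c_v` of the lines through `v` belongs to `A`. So the
  `p_v` are exactly the minimal primes.
* `A / (p_u + p_v)` is the quotient of `B` by the ideal `J` of values at `v` of functions vanishing
  at `u`. If `e = uv` is an edge, then `0 ≠ c_v ∈ J ⊆ (ℓ e)`, and the dimension is `1`
  (`gluedRing.ringKrullDim_of_adj`). If `u ≠ v` are not adjacent, `J` contains `c_u` and `c_v`,
  which have no line in common, and the dimension is at most `0`
  (`gluedRing.ringKrullDim_of_not_adj`).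
-/

/-! ### Complete local rings -/

/-- The completion of a finite module is a quotient of its base change to the completed ring, so
precompleteness of the ring passes to the module. -/
theorem isPrecomplete_of_finite {B M : Type*} [CommRing B] (I : Ideal B) [IsPrecomplete I B]
    [AddCommGroup M] [Module B M] [Module.Finite B M] : IsPrecomplete I M := by
  rw [← AdicCompletion.of_surjective_iff]
  intro y
  obtain ⟨t, rfl⟩ := AdicCompletion.ofTensorProduct_surjective_of_finite I M y
  induction t with
  | zero => exact ⟨0, by simp⟩
  | add a b ha hb =>
    obtain ⟨a', ha⟩ := ha
    obtain ⟨b', hb⟩ := hb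
    exact ⟨a' + b', by simp [ha, hb]⟩
  | tmul r x =>
    obtain ⟨b, rfl⟩ := AdicCompletion.of_surjective I B r
    refine ⟨b • x, ?_⟩
    ext n
    simp
    rfl

/-- Precompleteness only depends on the adic topology: the subsequence `f ((k + 1) * n)` of a
`J`-adic Cauchy sequence is `I`-adically Cauchy. -/
theorem isPrecomplete_of_pow_le {A : Type*} [CommRing A] {I J : Ideal A} (hIJ : I ≤ J) {k : ℕ}
    (hk : J ^ k ≤ I) [IsPrecomplete I A] : IsPrecomplete J A := by
  refine ⟨fun f hf => ?_⟩
  obtain ⟨L, hL⟩ := IsPrecomplete.prec (I := I) inferInstance (f := fun n => f ((k + 1) * n)) (by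
    intro m n hmn
    have h := hf (Nat.mul_le_mul_left (k + 1) hmn)
    refine h.mono (Submodule.smul_mono_left ?_)
    rw [pow_mul]
    exact Ideal.pow_right_mono ((Ideal.pow_le_pow_right k.le_succ).trans hk) m)
  refine ⟨L, fun n => ?_⟩
  have h1 : f n ≡ f ((k + 1) * n) [SMOD (J ^ n • ⊤ : Submodule A A)] :=
    hf (Nat.le_mul_of_pos_left n k.succ_pos)
  exact h1.trans ((hL n).mono (Submodule.smul_mono_left (Ideal.pow_right_mono hIJ n)))

/-- A local ring that is finite over a complete Noetherian local ring is complete. -/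
theorem isAdicComplete_of_finite (B A : Type*) [CommRing B] [IsNoetherianRing B] [IsLocalRing B]
    [IsPrecomplete (IsLocalRing.maximalIdeal B) B] [CommRing A] [IsLocalRing A] [Algebra B A]
    [Module.Finite B A] : IsAdicComplete (IsLocalRing.maximalIdeal A) A := by
  have : IsNoetherianRing A := IsNoetherianRing.of_finite B A
  set I := (IsLocalRing.maximalIdeal B).map (algebraMap B A) with hI
  have hpre : IsPrecomplete I A := by
    rw [hI, IsPrecomplete.map_algebraMap_iff]
    exact isPrecomplete_of_finite _
  -- every prime of `A` over `I` contracts to the maximal ideal of `B`, hence is maximal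
  have hrad : IsLocalRing.maximalIdeal A ≤ I.radical := by
    rw [Ideal.radical_eq_sInf]
    refine le_sInf fun P ⟨hIP, hP⟩ => ?_
    have hle : IsLocalRing.maximalIdeal B ≤ P.comap (algebraMap B A) :=
      Ideal.map_le_iff_le_comap.1 hIP
    have hmax : (P.comap (algebraMap B A)).IsMaximal := by
      rw [← (IsLocalRing.maximalIdeal.isMaximal B).eq_of_le (Ideal.IsPrime.ne_top inferInstance) hle]
      infer_instance
    have := Ideal.isMaximal_of_isIntegral_of_isMaximal_comap P hmax
    rw [IsLocalRing.eq_maximalIdeal this]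
  have hIm : I ≤ IsLocalRing.maximalIdeal A := by
    rw [hI, Ideal.map_le_iff_le_comap]
    have := Ideal.isMaximal_comap_of_isIntegral_of_isMaximal (R := B) (IsLocalRing.maximalIdeal A)
    rw [IsLocalRing.eq_maximalIdeal this]
  obtain ⟨k, hk⟩ := Ideal.exists_pow_le_of_le_radical_of_fg hrad
    (IsNoetherian.noetherian (IsLocalRing.maximalIdeal A))
  have := isPrecomplete_of_pow_le hIm hk
  constructor

theorem ringKrullDim_le_of_finite (B A : Type*) [CommRing B] [CommRing A] [Algebra B A]
    [Module.Finite B A] : ringKrullDim A ≤ ringKrullDim B :=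
  Order.krullDim_le_of_strictMono (PrimeSpectrum.comap (algebraMap B A))
    fun _ _ h => Ideal.IsIntegral.comap_lt_comap h

/-! ### The power series ring in two variables -/

open MvPowerSeries in
theorem maximalIdeal_mvPowerSeries :
    IsLocalRing.maximalIdeal (MvPowerSeries (Fin 2) ℚ) = Ideal.span (Set.range X) := by
  apply le_antisymm
  · intro f hf
    have hf0 : coeff 0 f = 0 := by
      rw [IsLocalRing.mem_maximalIdeal, mem_nonunits_iff, isUnit_iff_constantCoeff,
        isUnit_iff_ne_zero, not_not] at hf
      simpa using hf
    classical
    let g : MvPowerSeries (Fin 2) ℚ := fun m => if m 0 = 0 then 0 else coeff m f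
    have hg (m) : coeff m g = if m 0 = 0 then 0 else coeff m f := rfl
    have h0 : (X 0 : MvPowerSeries (Fin 2) ℚ) ∣ g := by
      rw [X_dvd_iff]
      intro m hm
      simp [hg, hm]
    have h1 : (X 1 : MvPowerSeries (Fin 2) ℚ) ∣ f - g := by
      rw [X_dvd_iff]
      intro m hm
      rw [map_sub, hg]
      split_ifs with h
      · have : m = 0 := by
          ext i
          fin_cases i <;> simp [h, hm]
        rw [this, hf0, sub_zero]
      · simp
    rw [← sub_add_cancel f g]
    exact Ideal.add_mem _
      (Ideal.mem_of_dvd _ h1 (Ideal.subset_span ⟨1, rfl⟩))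
      (Ideal.mem_of_dvd _ h0 (Ideal.subset_span ⟨0, rfl⟩))
  · rw [Ideal.span_le]
    rintro _ ⟨i, rfl⟩
    simp [isUnit_iff_constantCoeff]

/-- The maximal ideal has two generators, which bounds the dimension above; adjoining a power
series variable raises the dimension by at least one, which bounds it below. -/
theorem ringKrullDim_mvPowerSeries : ringKrullDim (MvPowerSeries (Fin 2) ℚ) = 2 := by
  apply le_antisymm
  · refine (ringKrullDim_le_spanFinrank_maximalIdeal _).trans ?_
    rw [maximalIdeal_mvPowerSeries]
    have h := Submodule.spanFinrank_span_le_ncard_of_finite (R := MvPowerSeries (Fin 2) ℚ)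
      (Set.finite_range (MvPowerSeries.X (σ := Fin 2) (R := ℚ)))
    have h2 : (Set.range (MvPowerSeries.X (σ := Fin 2) (R := ℚ))).ncard ≤ 2 := by
      rw [← Set.image_univ]
      exact (Set.ncard_image_le Set.finite_univ).trans (by simp [Set.ncard_univ])
    exact_mod_cast h.trans h2
  · rw [ringKrullDim_eq_of_ringEquiv (MvPowerSeries.finSuccEquiv ℚ 1).toRingEquiv]
    refine le_trans ?_ ringKrullDim_succ_le_ringKrullDim_powerseries
    rw [ringKrullDim_eq_of_ringEquiv (MvPowerSeries.finSuccEquiv ℚ 0).toRingEquiv]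
    refine le_trans ?_ (add_le_add_left ringKrullDim_succ_le_ringKrullDim_powerseries 1)
    refine le_trans ?_ (add_le_add_left (add_le_add_left ringKrullDim_nonneg_of_nontrivial 1) 1)
    norm_num

open MvPowerSeries in
/-- Lines of distinct slopes meet only in the closed point. -/
theorem maximalIdeal_le_of_lines {a b : ℚ} (hab : a ≠ b) {P : Ideal (MvPowerSeries (Fin 2) ℚ)}
    (ha : X 0 - C a * X 1 ∈ P) (hb : X 0 - C b * X 1 ∈ P) :
    IsLocalRing.maximalIdeal (MvPowerSeries (Fin 2) ℚ) ≤ P := by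
  have h1 : (X 1 : MvPowerSeries (Fin 2) ℚ) ∈ P := by
    have : (X 1 : MvPowerSeries (Fin 2) ℚ) =
        C (b - a)⁻¹ * ((X 0 - C a * X 1) - (X 0 - C b * X 1)) := by
      have h : (X 0 - C a * X 1) - (X 0 - C b * X 1) =
        (C (b - a) * X 1 : MvPowerSeries (Fin 2) ℚ) := by rw [map_sub]; ring
      rw [h, ← mul_assoc, ← map_mul, inv_mul_cancel₀ (sub_ne_zero.2 hab.symm), map_one, one_mul]
    rw [this]
    exact P.mul_mem_left _ (P.sub_mem ha hb)
  have h0 : (X 0 : MvPowerSeries (Fin 2) ℚ) ∈ P := by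
    simpa using P.add_mem ha (P.mul_mem_left (C a) h1)
  rw [maximalIdeal_mvPowerSeries, Ideal.span_le]
  rintro _ ⟨i, rfl⟩
  fin_cases i
  · exact h0
  · exact h1

open MvPowerSeries in
theorem line_ne_zero (a : ℚ) : (X 0 - C a * X 1 : MvPowerSeries (Fin 2) ℚ) ≠ 0 := by
  intro h
  classical
  have := congrArg (coeff (Finsupp.single 0 1)) h
  simp [coeff_X, coeff_C_mul, Finsupp.single_left_inj] at this

/-! ### Gluing copies of a ring along a graph -/

/-- The ring obtained from copies of `B` indexed by the vertices of `G` by gluing, for each edge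
`e = uv`, the copies at `u` and `v` along the hypersurface `ℓ e = 0`: tuples `f` with
`f u ≡ f v` modulo `ℓ e`. The values of `ℓ` on pairs that are not edges play no role. -/
def gluedRing {V B : Type*} [CommRing B] (G : SimpleGraph V) (ℓ : Sym2 V → B) :
    Subalgebra B (V → B) where
  carrier := {f | ∀ u v, G.Adj u v → ℓ s(u, v) ∣ f u - f v}
  mul_mem' {f g} hf hg u v h := by
    have : (f * g) u - (f * g) v = f u * (g u - g v) + (f u - f v) * g v := by
      simp only [Pi.mul_apply]; ring
    rw [this]
    exact dvd_add (dvd_mul_of_dvd_right (hg u v h) _) (dvd_mul_of_dvd_left (hf u v h) _)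
  add_mem' {f g} hf hg u v h := by
    have : (f + g) u - (f + g) v = (f u - f v) + (g u - g v) := by
      simp only [Pi.add_apply]; ring
    rw [this]
    exact dvd_add (hf u v h) (hg u v h)
  algebraMap_mem' b u v _ := by simp

namespace gluedRing

variable {V B : Type*} [CommRing B] (G : SimpleGraph V) (ℓ : Sym2 V → B)

/-- Restriction of a glued function to the copy of `B` at the vertex `v`. -/
def eval (v : V) : gluedRing G ℓ →+* B :=
  (Pi.evalRingHom (fun _ : V => B) v).comp (gluedRing G ℓ).val.toRingHom

@[simp]
theorem eval_apply (v : V) (f : gluedRing G ℓ) : eval G ℓ v f = f.1 v := rfl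

theorem eval_surjective (v : V) : Function.Surjective (eval G ℓ v) := fun b =>
  ⟨algebraMap B _ b, rfl⟩

/-- The ideal of functions vanishing on the component at `v`. -/
abbrev compIdeal (v : V) : Ideal (gluedRing G ℓ) := RingHom.ker (eval G ℓ v)

theorem mem_compIdeal {v : V} {f : gluedRing G ℓ} : f ∈ compIdeal G ℓ v ↔ f.1 v = 0 := Iff.rfl

variable {G ℓ}

/-- Invertibility at one vertex propagates along the edges, since `ℓ e ∈ 𝔪`, and the componentwise
inverse is again compatible with the gluing. -/
theorem isLocalHom_eval [IsLocalRing B] (hG : G.Connected)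
    (hm : ∀ e, ℓ e ∈ IsLocalRing.maximalIdeal B) (v : V) : IsLocalHom (eval G ℓ v) := by
  refine ⟨fun f hf => ?_⟩
  have hstep (a b : V) (hab : G.Adj a b) (ha : IsUnit (f.1 a)) : IsUnit (f.1 b) := by
    by_contra hb
    have h1 : f.1 a - f.1 b ∈ IsLocalRing.maximalIdeal B :=
      Ideal.mem_of_dvd _ (f.2 a b hab) (hm _)
    have h2 : f.1 b ∈ IsLocalRing.maximalIdeal B := hb
    have h3 := add_mem h1 h2
    rw [sub_add_cancel] at h3
    exact h3 ha
  have hunit (w : V) : IsUnit (f.1 w) := by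
    obtain ⟨p⟩ := hG.preconnected v w
    induction p with
    | nil => exact hf
    | cons h _ ih => exact ih (hstep _ _ h hf)
  choose g hg using fun w => (hunit w).exists_right_inv
  refine IsUnit.of_mul_eq_one ⟨g, fun a b hab => ?_⟩ (Subtype.ext (funext hg))
  have : g a - g b = (f.1 a - f.1 b) * (-(g a * g b)) := by
    linear_combination g b * hg a - g a * hg b
  rw [this]
  exact dvd_mul_of_dvd_left (f.2 a b hab) _

theorem ringKrullDim_quotient_compIdeal (v : V) :
    ringKrullDim (gluedRing G ℓ ⧸ compIdeal G ℓ v) = ringKrullDim B :=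
  ringKrullDim_eq_of_ringEquiv (RingHom.quotientKerEquivOfSurjective (eval_surjective G ℓ v))

/-- The intersection of the components at `u` and `v` is the closed subscheme of the component at `v`
cut out by the restrictions of the functions vanishing on the component at `u`. -/
theorem ringKrullDim_quotient_sup (u v : V) :
    ringKrullDim (gluedRing G ℓ ⧸ (compIdeal G ℓ u + compIdeal G ℓ v)) =
      ringKrullDim (B ⧸ (compIdeal G ℓ u).map (eval G ℓ v)) := by
  have hsurj : Function.Surjective
      ((Ideal.Quotient.mk ((compIdeal G ℓ u).map (eval G ℓ v))).comp (eval G ℓ v)) :=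
    Ideal.Quotient.mk_surjective.comp (eval_surjective G ℓ v)
  have hker : RingHom.ker
      ((Ideal.Quotient.mk ((compIdeal G ℓ u).map (eval G ℓ v))).comp (eval G ℓ v)) =
      compIdeal G ℓ u + compIdeal G ℓ v := by
    rw [← RingHom.comap_ker, Ideal.mk_ker,
      Ideal.comap_map_of_surjective _ (eval_surjective G ℓ v)]
    rfl
  rw [← hker]
  exact ringKrullDim_eq_of_ringEquiv (RingHom.quotientKerEquivOfSurjective hsurj)

variable [Fintype V]

open Classical in
/-- The product of the equations of the hypersurfaces along which the component at `v` is glued to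
its neighbours. -/
noncomputable def conductor (G : SimpleGraph V) (ℓ : Sym2 V → B) (v : V) : B :=
  ∏ w with G.Adj v w, ℓ s(v, w)

theorem dvd_conductor {v w : V} (h : G.Adj v w) : ℓ s(v, w) ∣ conductor G ℓ v :=
  Finset.dvd_prod_of_mem _ (by simpa using h)

open Classical in
/-- The function supported on the component at `v`, where it equals the conductor. -/
noncomputable def bump (G : SimpleGraph V) (ℓ : Sym2 V → B) (v : V) : gluedRing G ℓ :=
  ⟨Pi.single v (conductor G ℓ v), fun a b hab => by
    by_cases ha : a = v
    · subst ha
      rw [Pi.single_eq_same, Pi.single_eq_of_ne hab.ne', sub_zero]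
      exact dvd_conductor hab
    · by_cases hb : b = v
      · subst hb
        rw [Pi.single_eq_same, Pi.single_eq_of_ne ha, zero_sub, Sym2.eq_swap]
        exact (dvd_conductor hab.symm).neg_right
      · simp [ha, hb]⟩

theorem bump_self (v : V) : (bump G ℓ v).1 v = conductor G ℓ v := by simp [bump]

theorem bump_of_ne {v w : V} (h : w ≠ v) : (bump G ℓ v).1 w = 0 := by simp [bump, h]

open Classical in
/-- The function vanishing on the component at `v`, and equal to the conductor of `v` on all
other components. -/
noncomputable def coBump (G : SimpleGraph V) (ℓ : Sym2 V → B) (v : V) : gluedRing G ℓ :=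
  algebraMap B _ (conductor G ℓ v) - bump G ℓ v

theorem coBump_self (v : V) : (coBump G ℓ v).1 v = 0 := by
  change conductor G ℓ v - (bump G ℓ v).1 v = 0
  rw [bump_self, sub_self]

theorem coBump_of_ne {v w : V} (h : w ≠ v) : (coBump G ℓ v).1 w = conductor G ℓ v := by
  change conductor G ℓ v - (bump G ℓ v).1 w = _
  rw [bump_of_ne h, sub_zero]

/-- The component ideals intersect in zero, so every prime contains one of them. -/
theorem exists_compIdeal_le (P : Ideal (gluedRing G ℓ)) [P.IsPrime] :
    ∃ v, compIdeal G ℓ v ≤ P := by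
  have : (Finset.univ.inf fun v => compIdeal G ℓ v) ≤ P := by
    intro f hf
    have : f = 0 := Subtype.ext (funext fun v =>
      (Finset.inf_le (f := fun v => compIdeal G ℓ v) (Finset.mem_univ v) hf : f.1 v = 0))
    rw [this]
    exact P.zero_mem
  obtain ⟨v, -, hv⟩ := (Ideal.IsPrime.inf_le' inferInstance).1 this
  exact ⟨v, hv⟩

section Domain

variable [IsDomain B]

instance (v : V) : (compIdeal G ℓ v).IsPrime := RingHom.ker_isPrime _

theorem conductor_ne_zero (h0 : ∀ e, ℓ e ≠ 0) (v : V) : conductor G ℓ v ≠ 0 :=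
  Finset.prod_ne_zero_iff.2 fun _ _ => h0 _

theorem eq_of_compIdeal_le (h0 : ∀ e, ℓ e ≠ 0) {u v : V}
    (h : compIdeal G ℓ u ≤ compIdeal G ℓ v) : u = v := by
  by_contra huv
  have h1 : bump G ℓ v ∈ compIdeal G ℓ u := bump_of_ne huv
  have h2 : (bump G ℓ v).1 v = 0 := h h1
  rw [bump_self] at h2
  exact conductor_ne_zero h0 v h2

theorem mem_minimalPrimes_iff (h0 : ∀ e, ℓ e ≠ 0) (P : Ideal (gluedRing G ℓ)) :
    P ∈ minimalPrimes (gluedRing G ℓ) ↔ ∃ v, compIdeal G ℓ v = P := by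
  rw [minimalPrimes_eq_minimals]
  constructor
  · intro hP
    have := hP.prop
    obtain ⟨v, hv⟩ := exists_compIdeal_le P
    exact ⟨v, hP.eq_of_le inferInstance hv⟩
  · rintro ⟨v, rfl⟩
    refine ⟨inferInstance, fun Q hQ hQv => ?_⟩
    obtain ⟨w, hw⟩ := exists_compIdeal_le Q
    rwa [← eq_of_compIdeal_le h0 (hw.trans hQv)]

end Domain

/-- Components at adjacent vertices meet in a curve: the intersection contains the hypersurface
`ℓ s(u, v) = 0`, and is contained in the zero locus of the conductor. -/
theorem ringKrullDim_of_adj [IsDomain B] [IsNoetherianRing B] [IsLocalRing B]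
    (hB : ringKrullDim B = 2) (h0 : ∀ e, ℓ e ≠ 0)
    (hm : ∀ e, ℓ e ∈ IsLocalRing.maximalIdeal B) {u v : V} (h : G.Adj u v) :
    ringKrullDim (B ⧸ (compIdeal G ℓ u).map (eval G ℓ v)) = 1 := by
  have hadd : (2 : WithBot ℕ∞) = 1 + 1 := by norm_num
  apply le_antisymm
  · have hmem : conductor G ℓ v ∈ (compIdeal G ℓ u).map (eval G ℓ v) := by
      rw [← bump_self]
      exact Ideal.mem_map_of_mem (eval G ℓ v) (x := bump G ℓ v) (bump_of_ne h.ne)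
    have := ringKrullDim_succ_le_of_surjective
      (Ideal.Quotient.mk ((compIdeal G ℓ u).map (eval G ℓ v))) Ideal.Quotient.mk_surjective
      (mem_nonZeroDivisors_of_ne_zero (conductor_ne_zero h0 v))
      (Ideal.Quotient.eq_zero_iff_mem.2 hmem)
    rwa [hB, hadd, ENat.WithBot.add_le_add_one_right_iff] at this
  · have hle : (compIdeal G ℓ u).map (eval G ℓ v) ≤ Ideal.span {ℓ s(u, v)} := by
      rw [Ideal.map_le_iff_le_comap]
      intro f hf
      have h1 := f.2 u v h
      rw [(mem_compIdeal G ℓ).1 hf, zero_sub, dvd_neg] at h1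
      exact Ideal.mem_span_singleton.2 h1
    have h1 := ringKrullDim_quotient_span_singleton_succ_eq_ringKrullDim_of_mem_nonZeroDivisors
      (mem_nonZeroDivisors_of_ne_zero (h0 s(u, v))) (hm s(u, v))
    rw [hB, hadd, ENat.WithBot.add_one_cancel] at h1
    rw [← h1]
    exact ringKrullDim_le_of_surjective _ (Ideal.Quotient.factor_surjective hle)

/-- Components at distinct non-adjacent vertices meet at most in the closed point: any
point of the intersection lies on a gluing hypersurface of each of them, and since `u` and `v` are
not adjacent these two hypersurfaces belong to different edges. -/
theorem ringKrullDim_of_not_adj [IsDomain B] [IsLocalRing B]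
    (hcop : ∀ e e', e ≠ e' → ∀ P : Ideal B, ℓ e ∈ P → ℓ e' ∈ P → IsLocalRing.maximalIdeal B ≤ P)
    {u v : V} (huv : u ≠ v) (h : ¬ G.Adj u v) :
    ringKrullDim (B ⧸ (compIdeal G ℓ u).map (eval G ℓ v)) ≤ 0 := by
  have : Ring.KrullDimLE 0 (B ⧸ (compIdeal G ℓ u).map (eval G ℓ v)) := by
    rw [Ideal.krullDimLE_zero_quotient_iff_forall_minimalPrimes_isMaximal]
    intro P hP
    have hPp : P.IsPrime := hP.1.1
    have hle := Ideal.map_le_iff_le_comap.1 hP.1.2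
    have hv : conductor G ℓ v ∈ P := by
      rw [← bump_self]
      exact hle (x := bump G ℓ v) (bump_of_ne huv)
    have hu : conductor G ℓ u ∈ P := by
      rw [← coBump_of_ne huv.symm]
      exact hle (x := coBump G ℓ u) (coBump_self u)
    obtain ⟨a, ha, hva⟩ := (Ideal.IsPrime.prod_mem_iff).1 hv
    obtain ⟨b, hb, hub⟩ := (Ideal.IsPrime.prod_mem_iff).1 hu
    have ha : G.Adj v a := by simpa using ha
    have hb : G.Adj u b := by simpa using hb
    have hne : s(v, a) ≠ s(u, b) := by
      intro he
      rcases Sym2.eq_iff.1 he with ⟨h1, -⟩ | ⟨h1, -⟩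
      · exact huv h1.symm
      · exact h (h1 ▸ hb)
    have := hcop _ _ hne P hva hub
    rw [← (IsLocalRing.maximalIdeal.isMaximal B).eq_of_le hPp.ne_top this]
    exact IsLocalRing.maximalIdeal.isMaximal B
  exact_mod_cast Ring.krullDimLE_iff.1 this

end gluedRing

/-- Every finite connected simple graph is the Hochster–Huneke graph of a complete
equidimensional Noetherian local ring of Krull dimension `2`. -/
theorem connected_graph_is_hochster_huneke_graph
    {V : Type*} [Fintype V] [Nonempty V] (G : SimpleGraph V) (hG : G.Connected) :
    ∃ (A : Type) (_ : CommRing A) (_ : IsNoetherianRing A) (_ : IsLocalRing A),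
      IsAdicComplete (IsLocalRing.maximalIdeal A) A ∧
      ringKrullDim A = 2 ∧
      (∀ p ∈ minimalPrimes A, ringKrullDim (A ⧸ p) = 2) ∧
      ∃ f : V → Ideal A,
        (∀ v, f v ∈ minimalPrimes A) ∧
        Function.Injective f ∧
        (∀ p ∈ minimalPrimes A, ∃ v, f v = p) ∧
        (∀ u v : V, u ≠ v → (G.Adj u v ↔ ringKrullDim (A ⧸ (f u + f v)) = 1)) := by
  -- The ring has to live in `Type`, so the vertices are replaced by `Fin n`.
  let ε : V ≃ Fin (Fintype.card V) := Fintype.equivFin V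
  let G' : SimpleGraph (Fin (Fintype.card V)) := G.map ε.toEmbedding
  let φ : G ≃g G' := SimpleGraph.Iso.map ε G
  have hG' : G'.Connected := φ.connected_iff.1 hG
  let B := MvPowerSeries (Fin 2) ℚ
  have : IsDomain B := NoZeroDivisors.to_isDomain _
  -- distinct slopes for distinct pairs of vertices
  obtain ⟨a, ha⟩ : ∃ a : Sym2 (Fin (Fintype.card V)) → ℚ, Function.Injective a :=
    have ⟨f, hf⟩ := Countable.exists_injective_nat (Sym2 (Fin (Fintype.card V)))
    ⟨fun e => f e, fun e e' h => hf (Nat.cast_injective h)⟩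
  let ℓ : Sym2 (Fin (Fintype.card V)) → B := fun e =>
    MvPowerSeries.X 0 - MvPowerSeries.C (a e) * MvPowerSeries.X 1
  have h0 : ∀ e, ℓ e ≠ 0 := fun e => line_ne_zero (a e)
  have hm : ∀ e, ℓ e ∈ IsLocalRing.maximalIdeal B := fun e => by
    rw [maximalIdeal_mvPowerSeries]
    exact sub_mem (Ideal.subset_span ⟨0, rfl⟩)
      (Ideal.mul_mem_left _ _ (Ideal.subset_span ⟨1, rfl⟩))
  have hcop : ∀ e e', e ≠ e' → ∀ P : Ideal B, ℓ e ∈ P → ℓ e' ∈ P →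
      IsLocalRing.maximalIdeal B ≤ P := fun e e' hne P h h' =>
    maximalIdeal_le_of_lines (ha.ne hne) h h'
  have hB : ringKrullDim B = 2 := ringKrullDim_mvPowerSeries
  have : IsPrecomplete (IsLocalRing.maximalIdeal B) B := by
    rw [maximalIdeal_mvPowerSeries]
    infer_instance
  have hfin : Module.Finite B (gluedRing G' ℓ) :=
    inferInstanceAs (Module.Finite B (Subalgebra.toSubmodule (gluedRing G' ℓ)))
  obtain ⟨v₀⟩ : Nonempty V := inferInstance
  have hloc : IsLocalRing (gluedRing G' ℓ) :=
    have := gluedRing.isLocalHom_eval hG' hm (ε v₀)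
    RingHom.domain_isLocalRing (gluedRing.eval G' ℓ (ε v₀))
  refine ⟨gluedRing G' ℓ, inferInstance, IsNoetherianRing.of_finite B _, hloc,
    isAdicComplete_of_finite B _, ?_, ?_, fun v => gluedRing.compIdeal G' ℓ (ε v), ?_, ?_, ?_, ?_⟩
  · refine le_antisymm (hB ▸ ringKrullDim_le_of_finite B _) ?_
    rw [← hB]
    exact ringKrullDim_le_of_surjective _ (gluedRing.eval_surjective G' ℓ (ε v₀))
  · intro p hp
    obtain ⟨v, rfl⟩ := (gluedRing.mem_minimalPrimes_iff h0 p).1 hp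
    rw [gluedRing.ringKrullDim_quotient_compIdeal, hB]
  · exact fun v => (gluedRing.mem_minimalPrimes_iff h0 _).2 ⟨_, rfl⟩
  · exact fun u v h => ε.injective (gluedRing.eq_of_compIdeal_le h0 (le_of_eq h))
  · intro p hp
    obtain ⟨v, rfl⟩ := (gluedRing.mem_minimalPrimes_iff h0 p).1 hp
    exact ⟨ε.symm v, by simp⟩
  · intro u v huv
    have hadj : G'.Adj (ε u) (ε v) ↔ G.Adj u v := φ.map_adj_iff
    rw [gluedRing.ringKrullDim_quotient_sup, ← hadj]
    refine ⟨fun h => gluedRing.ringKrullDim_of_adj hB h0 hm h, fun h => ?_⟩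
    by_contra hn
    have := gluedRing.ringKrullDim_of_not_adj hcop (ε.injective.ne huv) hn
    rw [h] at this
    exact absurd this (by norm_num)
end

section
/- Let K be an algebraically closed field and G a finite connected simple graph with at least one vertex. Then there exist n ∈ ℕ and a homogeneous ideal I of the polynomial ring S = K[x₀, ..., xₙ] such that the quotient ring A = S/I satisfies: A is reduced; the Krull dimension of A equals 2; there exist two elements f, g of A lying in the image of the irrelevant ideal (x₀, ..., xₙ) that form a regular sequence on A (so that A is a 2-dimensional Cohen–Macaulay standard graded K-algebra); and there is a bijection v ↦ p_v from the vertices of G to the set of minimal primes of A such that, for all distinct vertices u and v, u is adjacent to v in G if and only if the Krull dimension of A/(p_u + p_v) equals 1. In other words, every connected graph is the Hochster–Huneke graph of a reduced 2-dimensional Cohen–Macaulay standard graded K-algebra. -/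
/-!
The graph is realised by a nodal curve whose components are projective lines. Fix distinct
parameters `a e ∈ K`, one for each unordered pair `e` of vertices (`K` is infinite), and glue the
lines `u` and `v` at the parameter `a s(u, v)` whenever `u` and `v` are adjacent. The algebra is
the section ring of a line bundle of degree `d > 0` on every component, with `d` the number of
unordered pairs: in degree `n` it consists of the tuples `f : V → K[x]` with `deg (f v) ≤ n * d`
that agree at all the nodes (`piece`). With a second variable `T` recording the degree, this is a
subalgebra `glueRing` of `V → K[x][T]`, so it is reduced.

* Cohen–Macaulayness: `T, x ^ d T` is a regular sequence (`IsModel.isRegular`). If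
  `x ^ d T b = T c`, then `b = T b'`, and `b'` is again a section because `T` vanishes at no node.
* Generation in degree one (`glueRing_eq_adjoin`): in degree zero the sections are the constants
  `K`, which is where connectedness enters. In positive degree, divide with remainder by a monic
  polynomial `M` of degree `d` vanishing at every node: the remainders are sections of degree one,
  and the multiples of `M` split into components supported on single vertices. Hence the ring is a
  quotient of a polynomial ring by a homogeneous ideal (`ker_aeval_eq_span`).
* Dimension two: the ring is integral over `K[T, x ^ d T]`, and evaluation on one component at a
  parameter `t` is a surjection onto `K[T]` whose kernel is not a minimal prime.
* Minimal primes: they are the ideals `compIdeal ψ v` of sections vanishing on the component `v`;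
  their intersection is zero, and none contains another.
* Adjacency: if `u` and `v` are adjacent, `p_u + p_v` is contained in the kernel of evaluation at
  the common node, so the quotient has dimension one (`IsModel.dim_eq_one_of_adj`). Otherwise, a
  section of positive degree is the sum of one vanishing on `u` and one vanishing on `v`, by
  Lagrange interpolation on the other components, so `p_u + p_v` contains the irrelevant ideal
  (`IsModel.dim_le_zero_of_not_adj`).
-/

namespace HHGraph

open Polynomial

/-! ### The section ring of the glued curve -/

section GlueRing

variable {K : Type*} [Field K] {V : Type*}

/-- The homogeneous sections of degree `n`: tuples of polynomials of degree at most `n * d` (the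
dehomogenised forms of degree `n * d` on each line), agreeing at the node `a s(u, v)` for every
edge `uv`. -/
def piece (G : SimpleGraph V) (a : Sym2 V → K) (d n : ℕ) : Submodule K (V → K[X]) where
  carrier := {f | (∀ v, (f v).natDegree ≤ n * d) ∧
    ∀ u v, G.Adj u v → (f u).eval (a s(u, v)) = (f v).eval (a s(u, v))}
  zero_mem' := by simp
  add_mem' := by
    rintro f g ⟨hf, hf'⟩ ⟨hg, hg'⟩
    refine ⟨fun v => (natDegree_add_le _ _).trans (max_le (hf v) (hg v)), fun u v h => ?_⟩
    simp [hf' u v h, hg' u v h]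
  smul_mem' := by
    rintro c f ⟨hf, hf'⟩
    refine ⟨fun v => (natDegree_smul_le _ _).trans (hf v), fun u v h => ?_⟩
    simp [hf' u v h]

variable {G : SimpleGraph V} {a : Sym2 V → K} {d : ℕ}

theorem mem_piece {n : ℕ} {f : V → K[X]} : f ∈ piece G a d n ↔
    (∀ v, (f v).natDegree ≤ n * d) ∧
      ∀ u v, G.Adj u v → (f u).eval (a s(u, v)) = (f v).eval (a s(u, v)) := Iff.rfl

theorem mul_mem_piece {m n : ℕ} {f g : V → K[X]} (hf : f ∈ piece G a d m)
    (hg : g ∈ piece G a d n) : f * g ∈ piece G a d (m + n) := by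
  refine ⟨fun v => ?_, fun u v h => ?_⟩
  · rw [add_mul]
    exact natDegree_mul_le.trans (add_le_add (hf.1 v) (hg.1 v))
  · simp [hf.2 u v h, hg.2 u v h]

theorem const_mem_piece {n : ℕ} {p : K[X]} (hp : p.natDegree ≤ n * d) :
    (fun _ => p) ∈ piece G a d n := ⟨fun _ => hp, fun _ _ _ => rfl⟩

theorem single_mem_piece [DecidableEq V] {n : ℕ} {p : K[X]} (hp : p.natDegree ≤ n * d)
    (h0 : ∀ e, p.eval (a e) = 0) (v : V) : Pi.single v p ∈ piece G a d n := by
  refine ⟨fun w => ?_, fun u w h => ?_⟩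
  · obtain rfl | hw := eq_or_ne w v
    · simpa using hp
    · simp [hw]
  · have : ∀ w e, eval (a e) ((Pi.single v p : V → K[X]) w) = 0 := by
      intro w e
      obtain rfl | hw := eq_or_ne w v
      · simpa using h0 e
      · simp [hw]
    rw [this, this]

variable (K V) in
/-- The tuple `f T ^ n`, that is, the tuple `f` placed in degree `n`. -/
noncomputable def mono (n : ℕ) : (V → K[X]) →ₗ[K] (V → K[X][X]) where
  toFun f v := monomial n (f v)
  map_add' f g := by ext1 v; simp
  map_smul' c f := by ext1 v; exact (smul_monomial c n (f v)).symm

theorem mono_apply (n : ℕ) (f : V → K[X]) (v : V) : mono K V n f v = monomial n (f v) := rfl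

theorem mono_mul (m n : ℕ) (f g : V → K[X]) :
    mono K V m f * mono K V n g = mono K V (m + n) (f * g) := by
  ext1 v; simp [mono_apply, monomial_mul_monomial]

variable (G a d) in
/-- The section ring of the glued curve, as a subalgebra of `V → K[x][T]`; the outer variable `T`
records the degree. -/
def glueRing : Subalgebra K (V → K[X][X]) where
  carrier := {F | ∀ n, (fun v => (F v).coeff n) ∈ piece G a d n}
  mul_mem' := by
    intro F H hF hH n
    have : (fun v => ((F * H) v).coeff n) = ∑ x ∈ Finset.HasAntidiagonal.antidiagonal n,
        (fun v => (F v).coeff x.1) * (fun v => (H v).coeff x.2) := by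
      ext1 v; simp [coeff_mul]
    rw [this]
    refine Submodule.sum_mem _ fun x hx => ?_
    rw [← Finset.HasAntidiagonal.mem_antidiagonal.1 hx]
    exact mul_mem_piece (hF _) (hH _)
  add_mem' := by
    intro F H hF hH n
    have := Submodule.add_mem _ (hF n) (hH n)
    convert this using 1
    ext1 v; simp
  algebraMap_mem' := by
    intro c n
    have : (fun v => ((algebraMap K (V → K[X][X]) c) v).coeff n) =
        fun _ => (C (C c) : K[X][X]).coeff n := rfl
    rw [this]
    refine const_mem_piece ?_
    rw [coeff_C]; split_ifs <;> simp

theorem mem_glueRing {F : V → K[X][X]} : F ∈ glueRing G a d ↔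
    ∀ n, (fun v => (F v).coeff n) ∈ piece G a d n := Iff.rfl

theorem mono_mem {n : ℕ} {f : V → K[X]} (hf : f ∈ piece G a d n) :
    mono K V n f ∈ glueRing G a d := by
  intro m
  obtain rfl | h := eq_or_ne n m
  · simpa [mono_apply] using hf
  · have : (fun v => (mono K V n f v).coeff m) = 0 := by
      ext1 v; simp [mono_apply, coeff_monomial, h]
    rw [this]; exact zero_mem _

theorem eq_sum_mono [Fintype V] (F : V → K[X][X]) : ∃ N, F = ∑ n ∈ Finset.range N,
    mono K V n (fun v => (F v).coeff n) := by
  refine ⟨(∑ v, (F v).natDegree) + 1, ?_⟩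
  ext1 v
  have h : (F v).natDegree < (∑ v, (F v).natDegree) + 1 :=
    Nat.lt_succ_of_le (Finset.single_le_sum (f := fun v => (F v).natDegree)
      (fun _ _ => Nat.zero_le _) (Finset.mem_univ v))
  conv_lhs => rw [(F v).as_sum_range' _ h]
  simp [mono_apply]

/-- The sections of degree zero on a connected curve are constant. -/
theorem eq_const_of_mem_piece_zero (hG : G.Connected) {f : V → K[X]}
    (hf : f ∈ piece G a d 0) : ∃ c, f = fun _ => C c := by
  have h0 : ∀ v, f v = C ((f v).coeff 0) := fun v =>
    eq_C_of_natDegree_le_zero (by simpa using hf.1 v)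
  have ev : ∀ v x, (f v).eval x = (f v).coeff 0 := fun v x => by
    conv_lhs => rw [h0 v, eval_C]
  obtain ⟨v₀⟩ := hG.nonempty
  refine ⟨(f v₀).coeff 0, funext fun v => ?_⟩
  obtain ⟨w⟩ := hG.preconnected v v₀
  rw [h0 v]
  congr 1
  induction w with
  | nil => rfl
  | cons h _ ih =>
    rw [← ih]
    have := hf.2 _ _ h
    rwa [ev, ev] at this

/-- Every homogeneous section is a polynomial in sections of degree one, by division with remainder
by a monic polynomial `M` of degree `d` that vanishes at all nodes. -/
theorem mono_mem_adjoin [Fintype V] (hG : G.Connected) {M : K[X]} (hM : M.Monic)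
    (hMd : M.natDegree = d) (hM0 : ∀ e, M.eval (a e) = 0) (n : ℕ) :
    ∀ f ∈ piece G a d n,
      mono K V n f ∈ Algebra.adjoin K (mono K V 1 '' (piece G a d 1 : Set (V → K[X]))) := by
  classical
  induction n with
  | zero =>
    intro f hf
    obtain ⟨c, rfl⟩ := eq_const_of_mem_piece_zero hG hf
    exact Subalgebra.algebraMap_mem _ c
  | succ n ih =>
    intro f hf
    -- `f = f %ₘ M + ∑ v, (M at v) * (f v /ₘ M)`; the last quotients need no gluing condition,
    -- since they are placed diagonally, on all components at once.
    have h1 : mono K V (n + 1) f = mono K V 1 (fun v => f v %ₘ M) * mono K V n (fun _ => 1) +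
        ∑ v, mono K V 1 (Pi.single v M) * mono K V n (fun _ => f v /ₘ M) := by
      ext1 w
      simp only [Pi.add_apply, Finset.sum_apply, mono_mul, mono_apply, Pi.mul_apply]
      rw [Finset.sum_eq_single w]
      · simp only [Pi.single_eq_same, mul_one]
        rw [add_comm 1 n, ← map_add, modByMonic_add_div]
      · intro v _ hv
        simp [Pi.single_eq_of_ne' hv]
      · simp
    rw [h1]
    refine add_mem (mul_mem (Algebra.subset_adjoin ⟨_, ⟨fun v => ?_, fun u v h => ?_⟩, rfl⟩)
      (ih _ (const_mem_piece (by simp)))) (sum_mem fun v _ => mul_mem (Algebra.subset_adjoin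
        ⟨_, single_mem_piece (by simp [hMd]) hM0 v, rfl⟩) (ih _ (const_mem_piece ?_)))
    · simpa [hMd] using natDegree_modByMonic_le (f v) hM
    · have key : ∀ v e, (f v %ₘ M).eval (a e) = (f v).eval (a e) := by
        intro v e
        conv_rhs => rw [← modByMonic_add_div (f v) M]
        simp [hM0]
      simpa [key] using hf.2 u v h
    · rw [natDegree_divByMonic _ hM, hMd]
      have := hf.1 v
      rw [add_mul] at this
      omega

theorem glueRing_eq_adjoin [Fintype V] (hG : G.Connected) {M : K[X]} (hM : M.Monic)
    (hMd : M.natDegree = d) (hM0 : ∀ e, M.eval (a e) = 0) :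
    glueRing G a d = Algebra.adjoin K (mono K V 1 '' (piece G a d 1 : Set (V → K[X]))) := by
  apply le_antisymm
  · intro F hF
    obtain ⟨N, hN⟩ := eq_sum_mono F
    rw [hN]
    exact sum_mem fun n _ => mono_mem_adjoin hG hM hMd hM0 n _ (hF n)
  · rw [Algebra.adjoin_le_iff]
    rintro _ ⟨f, hf, rfl⟩
    exact mono_mem hf

end GlueRing

/-! ### Krull dimension of quotients -/

section Dimension

/-- The dimension drops on passing to the quotient by an ideal strictly larger than a prime. -/
theorem dim_quotient_add_one_le {R : Type*} [CommRing R] {P J : Ideal R} [P.IsPrime]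
    (hPJ : P ≤ J) {r : R} (hrJ : r ∈ J) (hrP : r ∉ P) :
    ringKrullDim (R ⧸ J) + 1 ≤ ringKrullDim R := by
  refine (ringKrullDim_succ_le_of_surjective (Ideal.Quotient.factor hPJ)
    (Ideal.Quotient.factor_surjective hPJ) (r := Ideal.Quotient.mk P r) ?_ ?_).trans
    (ringKrullDim_quotient_le P)
  · rw [mem_nonZeroDivisors_iff_ne_zero]
    rwa [Ne, Ideal.Quotient.eq_zero_iff_mem]
  · simpa [Ideal.Quotient.eq_zero_iff_mem] using hrJ

theorem dim_quotient_eq {R S : Type*} [CommRing R] [CommRing S] (f : R →+* S)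
    (hf : Function.Surjective f) : ringKrullDim (R ⧸ RingHom.ker f) = ringKrullDim S :=
  ringKrullDim_eq_of_ringEquiv (RingHom.quotientKerEquivOfSurjective hf)

theorem dim_quotient_mono {R : Type*} [CommRing R] {I J : Ideal R} (h : I ≤ J) :
    ringKrullDim (R ⧸ J) ≤ ringKrullDim (R ⧸ I) :=
  ringKrullDim_le_of_surjective (Ideal.Quotient.factor h) (Ideal.Quotient.factor_surjective h)

/-- By incomparability, contraction along an integral homomorphism strictly preserves chains. -/
theorem dim_le_of_isIntegral {R S : Type*} [CommRing R] [CommRing S] (f : R →+* S)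
    (hf : f.IsIntegral) : ringKrullDim S ≤ ringKrullDim R := by
  algebraize [f]
  refine Order.krullDim_le_of_strictMono (PrimeSpectrum.comap f) fun p q hpq => ?_
  exact Ideal.IsIntegral.comap_lt_comap (R := R) (I := p.asIdeal) (J := q.asIdeal) hpq

end Dimension

section Model

variable {K : Type*} [Field K] {V : Type*}

/-- The properties of the node parameters `a` and the degree `d` that the argument needs: some monic
polynomial of degree `d` vanishes at all nodes, and values at the nodes can be interpolated in
degree at most `d`. -/
structure IsNodes (a : Sym2 V → K) (d : ℕ) : Prop where
  pos : 0 < d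
  exists_monic : ∃ M : K[X], M.Monic ∧ M.natDegree = d ∧ ∀ e, M.eval (a e) = 0
  interpolate : ∀ r : Sym2 V → K, ∃ q : K[X], q.natDegree ≤ d ∧ ∀ e, q.eval (a e) = r e

theorem exists_isNodes [Infinite K] [Fintype V] [Nonempty V] :
    ∃ (a : Sym2 V → K) (d : ℕ), IsNodes a d := by
  classical
  have : Nonempty (Sym2 V) := ‹Nonempty V›.map fun v => s(v, v)
  let a : Sym2 V → K := fun e => Infinite.natEmbedding K (Fintype.equivFin (Sym2 V) e)
  have ha : Function.Injective a := fun e e' h =>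
    (Fintype.equivFin _).injective (Fin.ext ((Infinite.natEmbedding K).injective h))
  refine ⟨a, Fintype.card (Sym2 V), Fintype.card_pos, ⟨Lagrange.nodal Finset.univ a,
    Lagrange.nodal_monic, Lagrange.natDegree_nodal, fun e =>
      Lagrange.eval_nodal_at_node (Finset.mem_univ e)⟩, fun r =>
    ⟨Lagrange.interpolate Finset.univ a r, ?_, fun e =>
      Lagrange.eval_interpolate_at_node _ ha.injOn (Finset.mem_univ e)⟩⟩
  exact natDegree_le_of_degree_le (Lagrange.degree_interpolate_lt r ha.injOn).le

/-- `ψ` identifies the algebra `A` with the section ring `glueRing G a d`. -/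
structure IsModel (G : SimpleGraph V) (a : Sym2 V → K) (d : ℕ) {A : Type*} [CommRing A]
    [Algebra K A] (ψ : A →ₐ[K] (V → K[X][X])) : Prop where
  nodes : IsNodes a d
  inj : Function.Injective ψ
  mem : ∀ x, ψ x ∈ glueRing G a d
  surj : ∀ F ∈ glueRing G a d, ∃ x, ψ x = F

variable {G : SimpleGraph V} {a : Sym2 V → K} {d : ℕ} {A : Type*} [CommRing A] [Algebra K A]
  {ψ : A →ₐ[K] (V → K[X][X])}

/-- The ideal of sections vanishing on the component `v`. -/
noncomputable def compIdeal (ψ : A →ₐ[K] (V → K[X][X])) (v : V) : Ideal A :=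
  RingHom.ker ((Pi.evalRingHom (fun _ : V => K[X][X]) v).comp (ψ.toRingHom))

theorem mem_compIdeal {v : V} {x : A} : x ∈ compIdeal ψ v ↔ ψ x v = 0 := Iff.rfl

instance compIdeal_isPrime (v : V) : (compIdeal ψ v).IsPrime := RingHom.ker_isPrime _

namespace IsModel

variable (h : IsModel G a d ψ)
include h

theorem isReduced : IsReduced A := isReduced_of_injective ψ h.inj

theorem exists_mono {n : ℕ} {f : V → K[X]} (hf : f ∈ piece G a d n) :
    ∃ x, ψ x = mono K V n f := h.surj _ (mono_mem hf)

/-- Some section vanishes on every component except `v`, and not on `v`. -/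
theorem exists_bump (v : V) : ∃ x, ψ x v ≠ 0 ∧ ∀ w ≠ v, ψ x w = 0 := by
  classical
  obtain ⟨M, hM, hMd, hM0⟩ := h.nodes.exists_monic
  obtain ⟨x, hx⟩ := h.exists_mono (single_mem_piece (G := G) (n := 1) (by simp [hMd]) hM0 v)
  refine ⟨x, ?_, fun w hw => ?_⟩
  · simp [hx, mono_apply, hM.ne_zero]
  · simp [hx, mono_apply, hw]

theorem compIdeal_le_iff {v w : V} : compIdeal ψ v ≤ compIdeal ψ w ↔ v = w := by
  refine ⟨fun hle => ?_, fun hvw => hvw ▸ le_rfl⟩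
  by_contra hne
  obtain ⟨x, hx, hx'⟩ := h.exists_bump w
  exact hx (mem_compIdeal.1 (hle (mem_compIdeal.2 (hx' v hne))))

/-- The finite product of the ideals `compIdeal ψ v` is zero, so every prime contains one of them. -/
theorem exists_compIdeal_le [Fintype V] (p : Ideal A) [hp : p.IsPrime] :
    ∃ v, compIdeal ψ v ≤ p := by
  have : ∏ v, compIdeal ψ v ≤ p := by
    refine Ideal.prod_le_inf.trans fun x hx => ?_
    have hx0 : x = 0 := h.inj (by
      rw [map_zero]
      ext1 v
      exact mem_compIdeal.1 (Submodule.mem_finsetInf.1 hx v (Finset.mem_univ v)))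
    rw [hx0]; exact zero_mem _
  obtain ⟨v, -, hv⟩ := (Ideal.IsPrime.prod_le hp).1 this
  exact ⟨v, hv⟩

theorem compIdeal_mem_minimalPrimes [Fintype V] (v : V) : compIdeal ψ v ∈ minimalPrimes A := by
  refine ⟨⟨inferInstance, bot_le⟩, fun q ⟨hq, _⟩ hqv => ?_⟩
  obtain ⟨w, hw⟩ := h.exists_compIdeal_le q
  obtain rfl := h.compIdeal_le_iff.1 (hw.trans hqv)
  exact hw

theorem exists_compIdeal_eq [Fintype V] {p : Ideal A} (hp : p ∈ minimalPrimes A) :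
    ∃ v, compIdeal ψ v = p := by
  have := hp.1.1
  obtain ⟨v, hv⟩ := h.exists_compIdeal_le p
  exact ⟨v, le_antisymm hv (hp.2 ⟨inferInstance, bot_le⟩ hv)⟩

omit h in
variable (ψ) in
/-- Restriction of sections to the point with parameter `t` on the component `v`, with values in
`K[T]`. -/
noncomputable def evalAt (v : V) (t : K) : A →ₐ[K] K[X] :=
  (mapAlgHom (aeval t)).comp ((Pi.evalAlgHom K (fun _ : V => K[X][X]) v).comp ψ)

omit h in
theorem evalAt_apply (v : V) (t : K) (x : A) :
    evalAt ψ v t x = (ψ x v).map (evalRingHom t) := by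
  rfl

theorem evalAt_surjective (v : V) (t : K) : Function.Surjective (evalAt ψ v t) := by
  obtain ⟨x, hx⟩ := h.exists_mono (const_mem_piece (G := G) (a := a) (d := d) (n := 1)
    (p := 1) (by simp))
  rw [← AlgHom.range_eq_top, eq_top_iff, ← adjoin_X, Algebra.adjoin_le_iff]
  rintro _ rfl
  refine ⟨x, ?_⟩
  change evalAt ψ v t x = X
  rw [evalAt_apply, hx]
  simp [mono_apply, monomial_one_one_eq_X]

theorem dim_evalAt (v : V) (t : K) :
    ringKrullDim (A ⧸ RingHom.ker (evalAt ψ v t)) = 1 := by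
  have := dim_quotient_eq (evalAt ψ v t : A →+* K[X]) (h.evalAt_surjective v t)
  rw [ringKrullDim_of_isNoetherianRing, ringKrullDim_eq_zero_of_field] at this
  exact this.trans (by norm_num)

/-- The kernel of an evaluation `evalAt` strictly contains the prime of its component. -/
theorem two_le_dim [Nonempty V] : 2 ≤ ringKrullDim A := by
  obtain ⟨v⟩ := ‹Nonempty V›
  obtain ⟨M, hM, hMd, hM0⟩ := h.nodes.exists_monic
  obtain ⟨x, hx⟩ := h.exists_mono (const_mem_piece (G := G) (a := a) (d := d) (n := 1)
    (p := M) (by simp [hMd]))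
  have h1 := h.dim_evalAt v (a s(v, v))
  have h2 := dim_quotient_add_one_le (P := compIdeal ψ v)
    (J := RingHom.ker (evalAt ψ v (a s(v, v)))) (r := x) ?_ ?_ ?_
  · rw [h1] at h2
    exact h2
  · intro y hy
    rw [RingHom.mem_ker, evalAt_apply, mem_compIdeal.1 hy, Polynomial.map_zero]
  · rw [RingHom.mem_ker, evalAt_apply, hx]
    simp [mono_apply, hM0]
  · rw [mem_compIdeal, hx]
    simp [mono_apply, hM.ne_zero]

/-- The section ring is integral over `K[T, x ^ d T]`. Every section is a sum of
elements `c x ^ i T ^ n` of `V → K[x][T]` with `i ≤ n * d`, placed on a single component, and each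
of these is the product of a scalar, an idempotent of `V → K[x][T]`, and `x ^ i T ^ n`, whose `d`-th power is
`(x ^ d T) ^ i T ^ (n * d - i)`. -/
theorem dim_le_two [Fintype V] : ringKrullDim A ≤ 2 := by
  classical
  obtain ⟨x, hx⟩ := h.exists_mono (const_mem_piece (G := G) (a := a) (d := d) (n := 1)
    (p := 1) (by simp))
  obtain ⟨y, hy⟩ := h.exists_mono (const_mem_piece (G := G) (a := a) (d := d) (n := 1)
    (p := X ^ d) (by simp))
  let j : MvPolynomial (Fin 2) K →ₐ[K] A := MvPolynomial.aeval ![x, y]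
  have hj : (j : MvPolynomial (Fin 2) K →+* A).IsIntegral := by
    let φ : MvPolynomial (Fin 2) K →+* (V → K[X][X]) := ψ.toRingHom.comp j
    have hmono : ∀ (n i : ℕ), i ≤ n * d →
        φ.IsIntegralElem (fun _ => monomial n (X ^ i)) := by
      intro n i hi
      have : φ.IsIntegralElem ((fun _ => monomial n (X ^ i) : V → K[X][X]) ^ d) := by
        have e : (fun _ => monomial n (X ^ i) : V → K[X][X]) ^ d =
            φ (MvPolynomial.X 0 ^ (n * d - i) * MvPolynomial.X 1 ^ i) := by
          ext1 v
          simp [φ, j, hx, hy, mono_apply, monomial_pow, monomial_mul_monomial]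
          rw [Nat.sub_add_cancel hi, ← pow_mul, ← pow_mul, mul_comm i d]
        rw [e]
        exact φ.isIntegralElem_map
      algebraize [φ]
      exact IsIntegral.of_pow h.nodes.pos this
    have hall : ∀ F ∈ glueRing G a d, φ.IsIntegralElem F := by
      intro F hF
      obtain ⟨N, hN⟩ := eq_sum_mono F
      rw [hN]
      algebraize [φ]
      refine IsIntegral.sum _ fun n _ => ?_
      set f : V → K[X] := fun v => (F v).coeff n with hf
      have e : mono K V n f = ∑ v, ∑ i ∈ Finset.range (n * d + 1),
          (Pi.single v 1 * φ (MvPolynomial.C ((f v).coeff i))) *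
            (fun _ => monomial n (X ^ i) : V → K[X][X]) := by
        ext1 w
        simp only [Finset.sum_apply, Pi.mul_apply]
        rw [Finset.sum_eq_single w]
        · have : (f w).natDegree < n * d + 1 := Nat.lt_succ_of_le ((hF n).1 w)
          rw [mono_apply]
          conv_lhs => rw [(f w).as_sum_range' _ this]
          rw [map_sum]
          refine Finset.sum_congr rfl fun i _ => ?_
          simp [φ, j, Polynomial.algebraMap_apply, ← C_mul_X_pow_eq_monomial]
          ring
        · intro v _ hv
          simp [Pi.single_eq_of_ne' hv]
        · simp
      rw [e]
      refine IsIntegral.sum _ fun v _ => IsIntegral.sum _ fun i hi => ?_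
      refine IsIntegral.mul (IsIntegral.mul ?_ φ.isIntegralElem_map)
        (hmono n i (Nat.le_of_lt_succ (Finset.mem_range.1 hi)))
      -- `Pi.single v 1` is idempotent.
      refine ⟨X ^ 2 - X, monic_X_pow_sub (by simp), ?_⟩
      ext1 w
      obtain rfl | hw := eq_or_ne w v <;> simp [*]
    intro z
    obtain ⟨p, hp, hp0⟩ := hall _ (h.mem z)
    refine ⟨p, hp, h.inj ?_⟩
    rw [map_zero, ← hp0]
    exact hom_eval₂ p (j : MvPolynomial (Fin 2) K →+* A) ψ.toRingHom z
  have := dim_le_of_isIntegral _ hj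
  rw [MvPolynomial.ringKrullDim_of_isNoetherianRing, ringKrullDim_eq_zero_of_field] at this
  simpa using this

theorem dim_eq_two [Fintype V] [Nonempty V] : ringKrullDim A = 2 :=
  le_antisymm h.dim_le_two h.two_le_dim

end IsModel
end Model

/-! ### Regular sequence and adjacency -/

namespace IsModel

variable {K : Type*} [Field K] {V : Type*}
  {G : SimpleGraph V} {a : Sym2 V → K} {d : ℕ} {A : Type*} [CommRing A] [Algebra K A]
  {ψ : A →ₐ[K] (V → K[X][X])}

section Augmentation

variable (ψ) in
/-- The augmentation, whose kernel is the irrelevant ideal when the graph is connected: the constant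
term of a section in degree zero, read off on the component `v`. -/
noncomputable def aug (v : V) : A →ₐ[K] K := (aeval 0).comp (evalAt ψ v 0)

theorem aug_apply (v : V) (x : A) : aug ψ v x = ((ψ x v).coeff 0).eval 0 := by
  change aeval (0 : K) ((ψ x v).map (evalRingHom 0)) = _
  rw [coe_aeval_eq_eval, ← coeff_zero_eq_eval_zero, coeff_map, coe_evalRingHom]

theorem dim_aug (v : V) : ringKrullDim (A ⧸ RingHom.ker (aug ψ v)) = 0 := by
  have hs : Function.Surjective (aug ψ v) := fun c =>
    ⟨algebraMap K A c, by rw [AlgHom.commutes]; rfl⟩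
  exact (dim_quotient_eq (aug ψ v : A →+* K) hs).trans (ringKrullDim_eq_zero_of_field K)

end Augmentation

variable (h : IsModel G a d ψ)
include h

/-- The elements `T` and `x ^ d T` form a regular sequence. -/
theorem isRegular [Nonempty V] {f g : A} (hf : ψ f = mono K V 1 (fun _ => 1))
    (hg : ψ g = mono K V 1 (fun _ => X ^ d)) : RingTheory.Sequence.IsRegular A [f, g] := by
  obtain ⟨v₀⟩ := ‹Nonempty V›
  have hf' : ψ f = fun _ => X := by
    ext1 v; rw [hf, mono_apply, monomial_one_one_eq_X]
  have hg' : ψ g = fun _ => C (X ^ d) * X := by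
    ext1 v; rw [hg, mono_apply, C_mul_X_eq_monomial]
  refine (RingTheory.Sequence.isRegular_iff _ _).2 ⟨?_, ?_⟩
  · rw [RingTheory.Sequence.isWeaklyRegular_cons_iff,
      RingTheory.Sequence.isWeaklyRegular_singleton_iff,
      isSMulRegular_quotient_iff_mem_of_smul_mem]
    refine ⟨?_, fun x hx => ?_⟩
    · rw [isSMulRegular_iff_right_eq_zero_of_smul]
      intro x hx
      apply h.inj
      rw [map_zero]
      ext1 v
      have := congrFun (congrArg ψ hx) v
      simpa [hf'] using this
    · rw [Submodule.mem_smul_pointwise_iff_exists] at hx ⊢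
      obtain ⟨y, -, hy⟩ := hx
      have hxy : ∀ v n, (ψ y v).coeff n = X ^ d * (ψ x v).coeff n := by
        intro v n
        have h1 : X * ψ y v = C (X ^ d) * X * ψ x v := by
          have := congrFun (congrArg ψ hy) v
          rwa [smul_eq_mul, smul_eq_mul, map_mul, map_mul, hf', hg'] at this
        have h2 : ψ y v = C (X ^ d) * ψ x v :=
          mul_left_cancel₀ X_ne_zero (h1.trans (by ring))
        rw [h2, coeff_C_mul]
      have hdeg : ∀ v n, (ψ x v).coeff n ≠ 0 → d + ((ψ x v).coeff n).natDegree ≤ n * d := by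
        intro v n hn
        have := (h.mem y n).1 v
        dsimp only at this
        rwa [hxy, natDegree_mul (pow_ne_zero _ X_ne_zero) hn, natDegree_X_pow] at this
      -- The degree bound improves by `d`, so dividing `x` by `T` leaves a section.
      obtain ⟨z, hz⟩ := h.surj (fun v => (ψ x v).divX) (fun n => by
        refine ⟨fun v => ?_, fun u v huv => ?_⟩
        · dsimp only
          rw [coeff_divX]
          by_cases hn : (ψ x v).coeff (n + 1) = 0
          · simp [hn]
          · have := hdeg v _ hn
            rw [add_mul] at this
            omega
        · simpa [coeff_divX] using (h.mem x (n + 1)).2 u v huv)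
      refine ⟨z, trivial, h.inj ?_⟩
      ext1 v
      -- `d > 0` rules out a part in degree zero.
      have h0 : (ψ x v).coeff 0 = 0 := by
        by_contra hn
        have := hdeg v 0 hn
        have := h.nodes.pos
        omega
      have := X_mul_divX_add (ψ x v)
      rw [h0] at this
      simpa [hf', hz] using this
  · intro htop
    have hle : (Ideal.ofList [f, g] • ⊤ : Submodule A A) ≤ RingHom.ker (aug ψ v₀) := by
      rw [smul_eq_mul, Ideal.mul_top, Ideal.ofList, Ideal.span_le]
      intro x hx
      rw [SetLike.mem_coe, RingHom.mem_ker, aug_apply]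
      simp only [List.mem_cons, List.not_mem_nil, or_false, Set.mem_ofPred_eq] at hx
      rcases hx with rfl | rfl
      · simp [hf']
      · simp [hg']
    rw [← htop] at hle
    have := hle (show (1 : A) ∈ (⊤ : Submodule A A) from trivial)
    rw [RingHom.mem_ker, map_one] at this
    exact one_ne_zero this

/-- Components that are not adjacent meet only at the vertex of the cone: the sum of their ideals
contains the irrelevant ideal. -/
theorem dim_le_zero_of_not_adj [Fintype V] (hG : G.Connected) {u v : V} (huv : u ≠ v)
    (hadj : ¬ G.Adj u v) : ringKrullDim (A ⧸ (compIdeal ψ u + compIdeal ψ v)) ≤ 0 := by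
  classical
  rw [← dim_aug (ψ := ψ) u]
  apply dim_quotient_mono
  intro x hx
  rw [RingHom.mem_ker, aug_apply] at hx
  have hx0 : ∀ w, (ψ x w).coeff 0 = 0 := by
    obtain ⟨c, hc⟩ := eq_const_of_mem_piece_zero hG (h.mem x 0)
    have hc' : ∀ w, (ψ x w).coeff 0 = C c := congrFun hc
    have : c = 0 := by simpa [hc'] using hx
    simpa [this] using hc'
  choose y hy using fun n => h.exists_mono (h.mem x n)
  have hyJ : ∀ n, y n ∈ compIdeal ψ u + compIdeal ψ v := by
    intro n
    obtain _ | n := n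
    · have : y 0 = 0 := h.inj (by rw [hy, map_zero]; ext1 w; simp [mono_apply, hx0])
      rw [this]; exact zero_mem _
    set f : V → K[X] := fun w => (ψ x w).coeff (n + 1) with hf
    have hfm : f ∈ piece G a d (n + 1) := h.mem x (n + 1)
    -- `r` is a section with value `0` on `u` and `f v` on `v`; on any other component it
    -- interpolates `f` at the nodes on `v` and `0` at the others. Then `r` vanishes on `u` and
    -- `f - r` vanishes on `v`.
    choose q hqd hq using fun w => h.nodes.interpolate
      fun e => if v ∈ e then (f w).eval (a e) else 0
    let r : V → K[X] := fun w => if w = u then 0 else if w = v then f v else q w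
    have hr : ∀ w e, w ∈ e → e ≠ s(u, v) →
        (r w).eval (a e) = if v ∈ e then (f w).eval (a e) else 0 := by
      intro w e hwe he
      by_cases hwu : w = u
      · subst hwu
        have : v ∉ e := fun hve => he ((Sym2.mem_and_mem_iff huv).1 ⟨hwe, hve⟩)
        simp [r, this]
      · by_cases hwv : w = v
        · subst hwv
          simp [r, hwu, hwe]
        · simp [r, hwu, hwv, hq]
    obtain ⟨z, hz⟩ := h.exists_mono (show r ∈ piece G a d (n + 1) by
      refine ⟨fun w => ?_, fun w w' hww => ?_⟩
      · by_cases hwu : w = u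
        · simp [r, hwu]
        · by_cases hwv : w = v
          · simpa [r, hwv, huv.symm] using hfm.1 v
          · simpa [r, hwu, hwv] using (hqd w).trans (Nat.le_mul_of_pos_left d n.succ_pos)
      · have he : s(w, w') ≠ s(u, v) := fun he => hadj (by
          rwa [← SimpleGraph.mem_edgeSet, ← he, SimpleGraph.mem_edgeSet])
        rw [hr _ _ (by simp) he, hr _ _ (by simp) he, hfm.2 _ _ hww])
    rw [← add_sub_cancel z (y (n + 1))]
    refine Submodule.add_mem_sup (mem_compIdeal.2 ?_) (mem_compIdeal.2 ?_)
    · simp [hz, mono_apply, r]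
    · rw [map_sub, hz, hy, Pi.sub_apply, mono_apply, mono_apply]
      simp [r, huv.symm, f]
  obtain ⟨N, hN⟩ := eq_sum_mono (ψ x)
  have : x = ∑ n ∈ Finset.range N, y n := h.inj (by
    rw [map_sum]
    exact hN.trans (Finset.sum_congr rfl fun n _ => (hy n).symm))
  rw [this]
  exact sum_mem fun n _ => hyJ n

/-- Adjacent components meet in the node `a s(u, v)`, where evaluation maps onto `K[T]`. -/
theorem dim_eq_one_of_adj [Fintype V] [Nonempty V] {u v : V} (huv : G.Adj u v) :
    ringKrullDim (A ⧸ (compIdeal ψ u + compIdeal ψ v)) = 1 := by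
  apply le_antisymm
  · obtain ⟨x, hx, hx'⟩ := h.exists_bump u
    have h2 := dim_quotient_add_one_le (P := compIdeal ψ u)
      (J := compIdeal ψ u + compIdeal ψ v) le_sup_left (r := x) (Ideal.mem_sup_right (mem_compIdeal.2 (hx' v huv.ne'))) hx
    rw [h.dim_eq_two, show (2 : WithBot ℕ∞) = 1 + 1 by norm_num] at h2
    exact ENat.WithBot.add_le_add_one_right_iff.1 h2
  · rw [← h.dim_evalAt u (a s(u, v))]
    apply dim_quotient_mono
    refine sup_le (fun y hy => ?_) (fun y hy => ?_)
    · rw [RingHom.mem_ker, evalAt_apply, mem_compIdeal.1 hy, Polynomial.map_zero]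
    · rw [RingHom.mem_ker, evalAt_apply]
      ext1 n
      have := (h.mem y n).2 u v huv
      dsimp only at this
      rw [coeff_map, coe_evalRingHom, this, mem_compIdeal.1 hy]
      simp

theorem adj_iff [Fintype V] [Nonempty V] (hG : G.Connected) {u v : V} (huv : u ≠ v) :
    G.Adj u v ↔ ringKrullDim (A ⧸ (compIdeal ψ u + compIdeal ψ v)) = 1 := by
  refine ⟨h.dim_eq_one_of_adj, fun h1 => ?_⟩
  by_contra hadj
  have := h.dim_le_zero_of_not_adj hG huv hadj
  rw [h1] at this
  exact absurd this (by norm_num)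

end IsModel

/-! ### Presentation by a homogeneous ideal -/

section Presentation

variable {K : Type*} [Field K] {V : Type*} {G : SimpleGraph V} {a : Sym2 V → K} {d : ℕ}

instance piece_finite [Fintype V] (n : ℕ) : Module.Finite K (piece G a d n) := by
  let c : piece G a d n →ₗ[K] (V → Fin (n * d + 1) → K) :=
    LinearMap.pi fun v => LinearMap.pi fun i =>
      lcoeff K i ∘ₗ LinearMap.proj v ∘ₗ (piece G a d n).subtype
  refine Module.Finite.of_injective c fun f g hfg => ?_
  ext1
  ext1 v
  ext i
  by_cases hi : i < n * d + 1
  · exact congrFun (congrFun hfg v) ⟨i, hi⟩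
  · rw [coeff_eq_zero_of_natDegree_lt ((f.2.1 v).trans_lt (by omega)),
      coeff_eq_zero_of_natDegree_lt ((g.2.1 v).trans_lt (by omega))]

theorem mono_pow (f : V → K[X]) (k : ℕ) : mono K V 1 f ^ k = mono K V k (f ^ k) := by
  ext1 v; simp [mono_apply, monomial_pow]

theorem mono_prod {ι : Type*} (s : Finset ι) (k : ι → ℕ) (f : ι → V → K[X]) :
    ∏ i ∈ s, mono K V (k i) (f i) = mono K V (∑ i ∈ s, k i) (∏ i ∈ s, f i) := by
  classical
  induction s using Finset.induction_on with
  | empty => rfl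
  | insert i s hi ih =>
    rw [Finset.prod_insert hi, ih, mono_mul, Finset.sum_insert hi, Finset.prod_insert hi]

/-- Sending the variables to sections of degree one gives a graded homomorphism. -/
theorem aeval_mem_range_mono {σ : Type*} (s : σ → V → K[X]) {p : MvPolynomial σ K} {e : ℕ}
    (hp : p.IsHomogeneous e) :
    MvPolynomial.aeval (fun i => mono K V 1 (s i)) p ∈ LinearMap.range (mono K V e) := by
  rw [p.as_sum, map_sum]
  refine sum_mem fun m hm => ?_
  have hm' : ∑ i ∈ m.support, m i = e := by
    rw [← hp (MvPolynomial.mem_support_iff.1 hm), ← Finsupp.degree_apply,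
      Finsupp.degree_eq_weight_one]
    rfl
  rw [MvPolynomial.aeval_monomial, ← Algebra.smul_def, Finsupp.prod]
  simp only [mono_pow]
  rw [mono_prod, hm']
  exact Submodule.smul_mem _ _ ⟨_, rfl⟩

/-- The kernel of a graded homomorphism is generated by homogeneous polynomials. -/
theorem ker_aeval_eq_span {σ : Type*} [Nonempty V] (s : σ → V → K[X]) :
    RingHom.ker (MvPolynomial.aeval (R := K) fun i => mono K V 1 (s i)) =
      Ideal.span {p | (∃ e, p.IsHomogeneous e) ∧
        MvPolynomial.aeval (fun i => mono K V 1 (s i)) p = 0} := by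
  apply le_antisymm
  · intro p hp
    rw [← MvPolynomial.sum_homogeneousComponent p]
    refine sum_mem fun i hi => Ideal.subset_span
      ⟨⟨i, MvPolynomial.homogeneousComponent_isHomogeneous i p⟩, ?_⟩
    choose f hf using fun i => aeval_mem_range_mono s
      (MvPolynomial.homogeneousComponent_isHomogeneous i p)
    rw [RingHom.mem_ker, ← MvPolynomial.sum_homogeneousComponent p, map_sum] at hp
    simp only [← hf] at hp
    rw [← hf]
    ext1 v
    have := congrArg (fun q => q.coeff i) (congrFun hp v)
    simp only [Finset.sum_apply, mono_apply, finsetSum_coeff, coeff_monomial] at this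
    rw [Finset.sum_eq_single i (by intro j _ hj; simp [hj]) (by simp [hi])] at this
    simpa [mono_apply] using this
  · rw [Ideal.span_le]
    exact fun p hp => hp.2

/-- Every section of degree one is the image of a linear form. -/
theorem exists_linear_preimage {n : ℕ} {s : Fin n → piece G a d 1}
    (hs : Submodule.span K (Set.range s) = ⊤) {f : V → K[X]} (hf : f ∈ piece G a d 1) :
    ∃ p ∈ Ideal.span (Set.range (MvPolynomial.X : Fin n → MvPolynomial (Fin n) K)),
      MvPolynomial.aeval (fun i => mono K V 1 (s i)) p = mono K V 1 f := by
  obtain ⟨c, hc⟩ := (Submodule.mem_span_range_iff_exists_fun K).1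
    (hs ▸ Submodule.mem_top : (⟨f, hf⟩ : piece G a d 1) ∈ Submodule.span K (Set.range s))
  refine ⟨∑ i, MvPolynomial.C (c i) * MvPolynomial.X i, sum_mem fun i _ =>
    Ideal.mul_mem_left _ _ (Ideal.subset_span ⟨i, rfl⟩), ?_⟩
  have hc' : f = ∑ i, c i • (s i : V → K[X]) := by
    simpa using (congrArg Subtype.val hc).symm
  rw [hc', map_sum, map_sum]
  refine Finset.sum_congr rfl fun i _ => ?_
  rw [map_mul, MvPolynomial.aeval_C, MvPolynomial.aeval_X, map_smul, Algebra.smul_def]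

theorem range_aeval [Fintype V] (hG : G.Connected) (ha : IsNodes a d) {n : ℕ}
    {s : Fin n → piece G a d 1} (hs : Submodule.span K (Set.range s) = ⊤) :
    (MvPolynomial.aeval (R := K) fun i => mono K V 1 (s i : V → K[X])).range = glueRing G a d := by
  apply le_antisymm
  · rintro _ ⟨p, rfl⟩
    induction p using MvPolynomial.induction_on with
    | C c => simp
    | add p q hp hq => simpa using add_mem hp hq
    | mul_X p i hp =>
      have := mul_mem hp (mono_mem (s i).2)
      simpa using this
  · obtain ⟨M, hM, hMd, hM0⟩ := ha.exists_monic
    rw [glueRing_eq_adjoin hG hM hMd hM0, Algebra.adjoin_le_iff]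
    rintro _ ⟨f, hf, rfl⟩
    obtain ⟨p, -, hp⟩ := exists_linear_preimage hs hf
    exact ⟨p, hp⟩

end Presentation

end HHGraph

open HHGraph

theorem connected_graph_is_hochster_huneke_graph_of_graded_CM
    (K : Type*) [Field K] [IsAlgClosed K]
    {V : Type*} [Fintype V] [Nonempty V] (G : SimpleGraph V) (hG : G.Connected) :
    ∃ (n : ℕ) (I : Ideal (MvPolynomial (Fin (n + 1)) K)),
      (∃ gens : Set (MvPolynomial (Fin (n + 1)) K),
        (∀ g ∈ gens, ∃ e : ℕ, g.IsHomogeneous e) ∧ I = Ideal.span gens) ∧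
      IsReduced (MvPolynomial (Fin (n + 1)) K ⧸ I) ∧
      ringKrullDim (MvPolynomial (Fin (n + 1)) K ⧸ I) = 2 ∧
      (∃ f g : MvPolynomial (Fin (n + 1)) K ⧸ I,
        f ∈ Ideal.map (Ideal.Quotient.mk I)
              (Ideal.span (Set.range (MvPolynomial.X : Fin (n + 1) → _))) ∧
        g ∈ Ideal.map (Ideal.Quotient.mk I)
              (Ideal.span (Set.range (MvPolynomial.X : Fin (n + 1) → _))) ∧
        RingTheory.Sequence.IsRegular (MvPolynomial (Fin (n + 1)) K ⧸ I) [f, g]) ∧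
      ∃ φ : V → Ideal (MvPolynomial (Fin (n + 1)) K ⧸ I),
        (∀ v, φ v ∈ minimalPrimes (MvPolynomial (Fin (n + 1)) K ⧸ I)) ∧
        Function.Injective φ ∧
        (∀ p ∈ minimalPrimes (MvPolynomial (Fin (n + 1)) K ⧸ I), ∃ v, φ v = p) ∧
        (∀ u v : V, u ≠ v →
          (G.Adj u v ↔
            ringKrullDim ((MvPolynomial (Fin (n + 1)) K ⧸ I) ⧸ (φ u + φ v)) = 1)) := by
  have := IsAlgClosed.instInfinite (K := K)
  obtain ⟨a, d, ha⟩ := exists_isNodes (K := K) (V := V)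
  obtain ⟨n, s₀, hs₀⟩ := Module.Finite.exists_fin (R := K) (M := piece G a d 1)
  -- A redundant zero generator makes the number of variables positive.
  obtain ⟨s, hs⟩ : ∃ s : Fin (n + 1) → piece G a d 1,
      Submodule.span K (Set.range s) = ⊤ := by
    refine ⟨Fin.cons 0 s₀, eq_top_iff.2 (hs₀ ▸ Submodule.span_mono ?_)⟩
    rintro _ ⟨i, rfl⟩
    exact ⟨i.succ, by simp⟩
  let Φ : MvPolynomial (Fin (n + 1)) K →ₐ[K] (V → Polynomial (Polynomial K)) :=
    MvPolynomial.aeval fun i => mono K V 1 (s i)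
  have hrange : Φ.range = glueRing G a d := range_aeval hG ha hs
  let ψ := Ideal.kerLiftAlg Φ
  have hψ : ∀ p, ψ (Ideal.Quotient.mk _ p) = Φ p := fun p => rfl
  have h : IsModel G a d ψ :=
    { nodes := ha
      inj := Ideal.kerLiftAlg_injective Φ
      mem := fun x => by
        obtain ⟨p, rfl⟩ := Ideal.Quotient.mk_surjective x
        rw [hψ, ← hrange]
        exact ⟨p, rfl⟩
      surj := fun F hF => by
        rw [← hrange] at hF
        obtain ⟨p, rfl⟩ := hF
        exact ⟨Ideal.Quotient.mk _ p, rfl⟩ }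
  obtain ⟨p, hp, hp'⟩ := exists_linear_preimage hs
    (const_mem_piece (G := G) (a := a) (d := d) (n := 1) (p := 1) (by simp))
  obtain ⟨q, hq, hq'⟩ := exists_linear_preimage hs
    (const_mem_piece (G := G) (a := a) (d := d) (n := 1) (p := Polynomial.X ^ d) (by simp))
  refine ⟨n, RingHom.ker Φ, ⟨_, fun g hg => hg.1, ker_aeval_eq_span _⟩, h.isReduced,
    h.dim_eq_two, ⟨Ideal.Quotient.mk _ p, Ideal.Quotient.mk _ q, Ideal.mem_map_of_mem _ hp,
      Ideal.mem_map_of_mem _ hq, h.isRegular hp' hq'⟩, compIdeal ψ, h.compIdeal_mem_minimalPrimes,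
    fun u v huv => h.compIdeal_le_iff.1 huv.le, fun p hp => h.exists_compIdeal_eq hp,
    fun u v huv => h.adj_iff hG huv⟩
end

section
/- Let H be a finite simple graph and let d ≥ 1. Then the line graph of H is the dual graph of a pure d-dimensional simplicial complex: there exists an injective assignment e ↦ Σ_e from the edges of H to finite sets of cardinality d+1 such that, for distinct edges e and f of H, |Σ_e ∩ Σ_f| = d if and only if e and f share a vertex. -/
/-!
Label the vertices of `H` by distinct natural numbers `≥ d - 1`, and let the facet of an edge
consist of the labels of its two endpoints together with the `d - 1` common points
`0, …, d - 2`; that is, cone `H` repeatedly. Then two facets meet in `d - 1` points plus the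
common endpoints of the two edges, and distinct edges have at most one common endpoint.
-/

/-- The simplex spanned by the cone points `0, …, k - 1` and the labels of the vertices in `s`,
where labels are shifted by `k` to avoid the cone points. -/
def coneSimplex {α : Type*} (φ : α ↪ ℕ) (k : ℕ) (s : Finset α) : Finset ℕ :=
  Finset.range k ∪ s.map (φ.trans (addRightEmbedding k))

lemma coneSimplex_inter {α : Type*} [DecidableEq α] (φ : α ↪ ℕ) (k : ℕ) (s t : Finset α) :
    coneSimplex φ k s ∩ coneSimplex φ k t = coneSimplex φ k (s ∩ t) := by
  simp only [coneSimplex, Finset.map_inter, Finset.union_inter_distrib_left]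

lemma card_coneSimplex {α : Type*} (φ : α ↪ ℕ) (k : ℕ) (s : Finset α) :
    (coneSimplex φ k s).card = k + s.card := by
  rw [coneSimplex, Finset.card_union_of_disjoint, Finset.card_range, Finset.card_map]
  rw [Finset.disjoint_left]
  intro x hx hx'
  obtain ⟨a, -, rfl⟩ := Finset.mem_map.1 hx'
  simp at hx

lemma Sym2.card_toFinset_inter_le_one {α : Type*} [DecidableEq α] {e f : Sym2 α} (h : e ≠ f) :
    (e.toFinset ∩ f.toFinset).card ≤ 1 := by
  rw [Finset.card_le_one]
  intro a ha b hb
  simp only [Finset.mem_inter, Sym2.mem_toFinset] at ha hb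
  by_contra hab
  exact h (((Sym2.mem_and_mem_iff hab).1 ⟨ha.1, hb.1⟩).trans
    ((Sym2.mem_and_mem_iff hab).1 ⟨ha.2, hb.2⟩).symm)

/-- The line graph of any finite simple graph `H` is the dual graph of a pure
`d`-dimensional simplicial complex, for every `d ≥ 1`: there is an injective assignment
of a facet (a finite set of cardinality `d + 1`) to each edge of `H` such that two
distinct facets intersect in `d` elements iff the corresponding edges share a vertex. -/
theorem line_graph_is_dual_graph_of_pure_complex
    {α : Type*} [Fintype α] [DecidableEq α] (H : SimpleGraph α) (d : ℕ) (hd : 1 ≤ d) :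
    ∃ F : H.edgeSet → Finset ℕ,
      Function.Injective F ∧
      (∀ e, (F e).card = d + 1) ∧
      (∀ e₁ e₂ : H.edgeSet, e₁ ≠ e₂ →
        ((F e₁ ∩ F e₂).card = d ↔ ∃ v : α, v ∈ (e₁ : Sym2 α) ∧ v ∈ (e₂ : Sym2 α))) := by
  let φ : α ↪ ℕ := (Fintype.equivFin α).toEmbedding.trans Fin.valEmbedding
  have hcard (e : H.edgeSet) : (e : Sym2 α).toFinset.card = 2 :=
    Sym2.card_toFinset_of_not_isDiag _ (H.not_isDiag_of_mem_edgeSet e.2)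
  have hF (e : H.edgeSet) : (coneSimplex φ (d - 1) (e : Sym2 α).toFinset).card = d + 1 := by
    rw [card_coneSimplex, hcard]
    omega
  have hle {e₁ e₂ : H.edgeSet} (hne : e₁ ≠ e₂) :=
    Sym2.card_toFinset_inter_le_one (Subtype.coe_injective.ne hne)
  refine ⟨fun e => coneSimplex φ (d - 1) (e : Sym2 α).toFinset, ?_, hF, ?_⟩
  · intro e₁ e₂ h
    -- Equal facets of distinct edges would meet in `d + 1` points, hence in too many.
    by_contra hne
    have h₁ := coneSimplex_inter φ (d - 1) (e₁ : Sym2 α).toFinset (e₂ : Sym2 α).toFinset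
    rw [← show coneSimplex φ (d - 1) _ = coneSimplex φ (d - 1) _ from h, Finset.inter_self] at h₁
    have h₂ := hF e₁
    rw [h₁, card_coneSimplex] at h₂
    have := hle hne
    omega
  · intro e₁ e₂ hne
    have hshare : (∃ v : α, v ∈ (e₁ : Sym2 α) ∧ v ∈ (e₂ : Sym2 α)) ↔
        0 < ((e₁ : Sym2 α).toFinset ∩ (e₂ : Sym2 α).toFinset).card := by
      simp [Finset.card_pos, Finset.Nonempty]
    rw [hshare, coneSimplex_inter, card_coneSimplex]
    have := hle hne
    omega
end
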